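/- arXiv:1612.06618 — 2 statements merged into one kernel-verified Lean document; each statement's English description precedes it below -/
import Mathlib

section
/- Fix ν > 0. Then as λ → ∞, Z(λ,ν) = exp(ν·λ^(1/ν)) / (λ^((ν-1)/(2ν)) · (2π)^((ν-1)/2) · √ν) · (1 + O(λ^(-1/ν))). Precisely: there exist constants C > 0 and Λ > 0 (depending only on ν) such that for all λ ≥ Λ, |Z(λ,ν) · λ^((ν-1)/(2ν)) · (2π)^((ν-1)/2) · √ν · exp(-ν·λ^(1/ν)) − 1| ≤ C·λ^(-1/ν). -/
open scoped BigOperators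

/-- The Conway-Maxwell-Poisson normalizing constant `Z(λ,ν) = ∑_{i=0}^∞ λ^i/(i!)^ν`. -/
noncomputable def cmpZ (lam nu : ℝ) : ℝ := ∑' i : ℕ, lam ^ i / (i.factorial : ℝ) ^ nu

open Real Filter Topology MeasureTheory

/-- second-order bound for `y log y` around `m` -/
lemma cmp_r_bounds (m s : ℝ) (hm : 0 < m) (hs : 0 < m + s) :
    (m + s) * log m + s ≤ (m + s) * log (m + s) ∧
    (m + s) * log (m + s) ≤ (m + s) * log m + s + s ^ 2 / m := by
  constructor
  · have h := Real.log_le_sub_one_of_pos (div_pos hm hs)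
    rw [Real.log_div hm.ne' hs.ne'] at h
    have h2 := mul_le_mul_of_nonneg_left h hs.le
    have : (m + s) * (m / (m + s) - 1) = -s := by field_simp; ring
    rw [this] at h2
    linarith
  · have h := Real.log_le_sub_one_of_pos (div_pos hs hm)
    rw [Real.log_div hs.ne' hm.ne'] at h
    have h2 := mul_le_mul_of_nonneg_left h hs.le
    have : (m + s) * ((m + s) / m - 1) = s + s ^ 2 / m := by field_simp; ring
    rw [this] at h2
    linarith

lemma cmp_log_stirling_rate (n : ℕ) :
    log (Stirling.stirlingSeq (n + 1)) ≤ log (√π) + 1 / (12 * ((n : ℝ) + 1)) := by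
  have hmono : Monotone (fun n : ℕ => log (Stirling.stirlingSeq (n + 1)) - 1 / (12 * ((n : ℝ) + 1))) := by
    refine monotone_nat_of_le_succ fun n => ?_
    have h := Stirling.log_stirlingSeq_sdiff_le (n + 1)
    have e : (1 : ℝ) / (12 * ((n + 1 : ℕ) : ℝ) * (((n + 1 : ℕ) : ℝ) + 1)) =
      1 / (12 * ((n : ℝ) + 1)) - 1 / (12 * (((n + 1 : ℕ) : ℝ) + 1)) := by
      push_cast; field_simp; ring
    rw [e] at h
    linarith
  have hlim : Tendsto (fun n : ℕ => log (Stirling.stirlingSeq (n + 1)) - 1 / (12 * ((n : ℝ) + 1))) atTop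
      (𝓝 (log (√π) - 0)) := by
    refine Tendsto.sub ?_ ?_
    · have := (Stirling.tendsto_stirlingSeq_sqrt_pi.comp (tendsto_add_atTop_nat 1)).log
        (by positivity : √π ≠ 0)
      exact this
    · have := (tendsto_one_div_add_atTop_nhds_zero_nat (𝕜 := ℝ)).const_mul (1 / 12)
      rw [mul_zero] at this
      refine this.congr fun n => ?_
      field_simp
  have := hmono.ge_of_tendsto hlim n
  simp only [sub_zero] at this
  linarith

lemma cmp_stirling : ∃ c : ℝ, 0 < c ∧ ∀ i : ℕ,
    |log (i.factorial : ℝ) - (((i : ℝ) + 1/2) * log ((i : ℝ) + 1/2) - ((i : ℝ) + 1/2)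
      + 1/2 * log (2 * π))| ≤ c / ((i : ℝ) + 1) := by
  set c0 := |log ((0 : ℕ).factorial : ℝ) - ((((0 : ℕ) : ℝ) + 1/2) * log (((0 : ℕ) : ℝ) + 1/2)
    - (((0 : ℕ) : ℝ) + 1/2) + 1/2 * log (2 * π))| with hc0
  refine ⟨c0 + 1, by positivity, fun i => ?_⟩
  rcases i with _ | n
  · rw [← hc0]; simp
  · have h1 := cmp_log_stirling_rate n
    have h2 : log (√π) ≤ log (Stirling.stirlingSeq (n + 1)) :=
      Real.log_le_log (by positivity) (Stirling.sqrt_pi_le_stirlingSeq (by omega))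
    rw [Stirling.log_stirlingSeq_formula] at h1 h2
    push_cast at h1 h2 ⊢
    have hx : (0 : ℝ) < (n : ℝ) + 1 := by positivity
    set x : ℝ := (n : ℝ) + 1 with hxd
    obtain ⟨h3, h4⟩ := cmp_r_bounds x (1/2) hx (by positivity)
    rw [Real.log_sqrt pi_pos.le, Real.log_mul (by norm_num) hx.ne',
      Real.log_div hx.ne' (exp_pos 1).ne', Real.log_exp] at h1 h2
    rw [Real.log_mul (by norm_num) pi_pos.ne']
    have h5 : (1:ℝ) / (12 * x) ≤ 1 / (x + 1) := by
      apply one_div_le_one_div_of_le <;> linarith [show (1:ℝ) ≤ x by simp [hxd]]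
    have h6 : (1/2 : ℝ)^2 / x ≤ 1 / (x + 1) := by
      rw [div_le_div_iff₀ hx (by positivity)]; linarith [show (1:ℝ) ≤ x by simp [hxd]]
    have h7 : 1 / (x + 1) ≤ (c0 + 1) / (x + 1) := by
      gcongr; linarith [abs_nonneg (log ((0 : ℕ).factorial : ℝ) - ((((0 : ℕ) : ℝ) + 1/2) * log (((0 : ℕ) : ℝ) + 1/2)
    - (((0 : ℕ) : ℝ) + 1/2) + 1/2 * log (2 * π)))]
    rw [abs_le]
    constructor <;> nlinarith

/-- normalized term -/
noncomputable def cmpT (ν α : ℝ) (i : ℕ) : ℝ :=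
  exp (ν * (((i : ℝ) + 1/2) * log α + 1/2 * log (2 * π) - log (i.factorial : ℝ)))

noncomputable def cmpG (ν α y : ℝ) : ℝ := exp (ν * (y - y * log (y / α)))

lemma cmpT_pos (ν α : ℝ) (i : ℕ) : 0 < cmpT ν α i := exp_pos _

lemma cmpT_succ (ν α : ℝ) (i : ℕ) :
    cmpT ν α (i + 1) = cmpT ν α i * exp (ν * (log α - log ((i : ℝ) + 1))) := by
  unfold cmpT
  rw [← exp_add, Nat.factorial_succ]
  push_cast
  rw [Real.log_mul (x := (i : ℝ) + 1) (by positivity) (by positivity)]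
  congr 1; ring

lemma cmpT_summable (ν α : ℝ) (hν : 0 < ν) : Summable (cmpT ν α) := by
  refine summable_of_ratio_test_tendsto_lt_one (l := 0) one_pos
    (Eventually.of_forall fun n => (cmpT_pos ν α n).ne') ?_
  have : (fun n => ‖cmpT ν α (n + 1)‖ / ‖cmpT ν α n‖) =
      fun n : ℕ => exp (ν * (log α - log ((n : ℝ) + 1))) := by
    funext n
    rw [Real.norm_of_nonneg (cmpT_pos _ _ _).le, Real.norm_of_nonneg (cmpT_pos _ _ _).le,
      cmpT_succ, mul_div_cancel_left₀ _ (cmpT_pos _ _ _).ne']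
  rw [this]
  refine tendsto_exp_atBot.comp (Tendsto.const_mul_atBot hν ?_)
  have h1 : Tendsto (fun n : ℕ => log ((n : ℝ) + 1)) atTop atTop :=
    tendsto_log_atTop.comp (tendsto_natCast_atTop_atTop.atTop_add tendsto_const_nhds)
  exact tendsto_atBot_add_const_left _ (log α) (tendsto_neg_atTop_atBot.comp h1)

lemma cmpT_shift (ν α : ℝ) (hν : 0 < ν) (k i j : ℕ) (hj : j ≤ k) :
    cmpT ν α i * exp (ν * j * (log α - log ((i : ℝ) + k))) ≤ cmpT ν α (i + j) := by
  induction j with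
  | zero => simp
  | succ j ih =>
    rw [← add_assoc, cmpT_succ]
    have e : exp (ν * ((j + 1 : ℕ) : ℝ) * (log α - log ((i : ℝ) + k))) =
      exp (ν * j * (log α - log ((i : ℝ) + k))) * exp (ν * (log α - log ((i : ℝ) + k))) := by
      rw [← exp_add]; push_cast; congr 1; ring
    rw [e, ← mul_assoc]
    refine mul_le_mul (ih (by omega)) ?_ (exp_pos _).le (cmpT_pos _ _ _).le
    apply exp_le_exp.2
    refine mul_le_mul_of_nonneg_left ?_ hν.le
    apply sub_le_sub_left
    apply Real.log_le_log (by positivity)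
    have : ((j + 1 : ℕ) : ℝ) ≤ k := by exact_mod_cast hj
    push_cast at this ⊢
    linarith

lemma cmpT_div_summable (ν α : ℝ) (hν : 0 < ν) :
    Summable (fun i : ℕ => cmpT ν α i / ((i : ℝ) + 1)) := by
  refine Summable.of_nonneg_of_le (fun i => ?_) (fun i => ?_) (cmpT_summable ν α hν)
  · have := cmpT_pos ν α i; positivity
  · apply div_le_self (cmpT_pos ν α i).le
    have : (0:ℝ) ≤ i := by positivity
    linarith

lemma cmpT_inv_moment (ν : ℝ) (hν : 0 < ν) : ∃ A : ℝ, 0 < A ∧ ∀ α : ℝ, 0 < α →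
    ∑' i : ℕ, cmpT ν α i / ((i : ℝ) + 1) ≤ A / α * ∑' i, cmpT ν α i := by
  obtain ⟨k, hk⟩ := exists_nat_gt (1 / ν)
  have hk0 : (0 : ℝ) < k := lt_trans (by positivity) hk
  have hk1 : (1 : ℝ) ≤ k := by
    have : 0 < k := by exact_mod_cast hk0
    exact_mod_cast this
  have hkν : 1 ≤ ν * k := by
    rw [div_lt_iff₀ hν] at hk; linarith
  refine ⟨2 * k, by positivity, fun α hα => ?_⟩
  have hs := cmpT_summable ν α hν
  have hsk : Summable (fun i => cmpT ν α (i + k)) := (summable_nat_add_iff k).2 hs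
  have hle : ∑' i, cmpT ν α (i + k) ≤ ∑' i, cmpT ν α i := by
    have := hs.sum_add_tsum_nat_add k
    have h0 : 0 ≤ ∑ i ∈ Finset.range k, cmpT ν α i :=
      Finset.sum_nonneg fun i _ => (cmpT_pos _ _ _).le
    linarith
  have key : ∀ i : ℕ, cmpT ν α i / ((i : ℝ) + 1) ≤ k / α * (cmpT ν α i + cmpT ν α (i + k)) := by
    intro i
    have hT := cmpT_pos ν α i
    have h1 := cmpT_shift ν α hν k i k le_rfl
    have hik : (0 : ℝ) < (i : ℝ) + k := by positivity
    have hi0 : (0 : ℝ) ≤ i := by positivity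
    have h2 : α / ((i : ℝ) + k) ≤ 1 + exp (ν * k * (log α - log ((i : ℝ) + k))) := by
      rw [← Real.log_div hα.ne' hik.ne']
      have hx : 0 < α / ((i : ℝ) + k) := by positivity
      set x := α / ((i : ℝ) + k)
      rcases le_total x 1 with h | h
      · linarith [exp_pos (ν * k * log x)]
      · have : x ≤ exp (ν * k * log x) := by
          nth_rewrite 1 [← exp_log hx]
          apply exp_le_exp.2
          have := Real.log_nonneg h
          nlinarith
        linarith
    have h3 : cmpT ν α i * (α / ((i : ℝ) + k)) ≤ cmpT ν α i + cmpT ν α (i + k) := by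
      have := mul_le_mul_of_nonneg_left h2 hT.le
      linarith
    have h4 : cmpT ν α i / ((i : ℝ) + 1) ≤ k / α * (cmpT ν α i * (α / ((i : ℝ) + k))) := by
      have : k / α * (cmpT ν α i * (α / ((i : ℝ) + k))) = cmpT ν α i * (k / ((i : ℝ) + k)) := by
        field_simp
      rw [this, div_eq_mul_one_div]
      refine mul_le_mul_of_nonneg_left ?_ hT.le
      rw [div_le_div_iff₀ (by positivity) hik]
      nlinarith
    refine h4.trans (mul_le_mul_of_nonneg_left h3 (by positivity))
  calc _ ≤ ∑' i, k / α * (cmpT ν α i + cmpT ν α (i + k)) :=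
        (cmpT_div_summable ν α hν).tsum_le_tsum key ((hs.add hsk).mul_left _)
    _ = k / α * (∑' i, cmpT ν α i + ∑' i, cmpT ν α (i + k)) := by
        rw [tsum_mul_left, hs.tsum_add hsk]
    _ ≤ k / α * (∑' i, cmpT ν α i + ∑' i, cmpT ν α i) := by gcongr
    _ = _ := by ring

lemma cmpG_continuous (ν α : ℝ) (hα : 0 < α) : Continuous (cmpG ν α) := by
  have h : Continuous (fun y : ℝ => (y / α) * log (y / α)) :=
    Real.continuous_mul_log.comp (continuous_id.div_const α)
  have e : cmpG ν α = fun y => exp (ν * (y - α * ((y / α) * log (y / α)))) := by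
    funext y; unfold cmpG; congr 3; field_simp
  rw [e]
  fun_prop

/-- pointwise two-sided bound -/
lemma cmpG_bounds (ν α m s : ℝ) (hν : 0 < ν) (hα : 0 < α) (hm : 0 < m) (hs : 0 < m + s) :
    exp (ν * (m - m * log m + m * log α) - ν * (s * (log m - log α)) - ν * (s ^ 2 / m))
      ≤ cmpG ν α (m + s) ∧
    cmpG ν α (m + s) ≤ exp (ν * (m - m * log m + m * log α) - ν * (s * (log m - log α))) := by
  obtain ⟨h1, h2⟩ := cmp_r_bounds m s hm hs
  unfold cmpG
  rw [Real.log_div hs.ne' hα.ne']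
  constructor <;> apply exp_le_exp.2
  · have := mul_le_mul_of_nonneg_left h2 hν.le
    nlinarith
  · have := mul_le_mul_of_nonneg_left h1 hν.le
    nlinarith

lemma cmpG_piece (ν α : ℝ) (hν : 0 < ν) (hα : 0 < α) (i : ℕ) :
    exp (ν * (((i : ℝ) + 1/2) - ((i : ℝ) + 1/2) * log ((i : ℝ) + 1/2) + ((i : ℝ) + 1/2) * log α)
        - ν / ((i : ℝ) + 1))
      ≤ ∫ y in (i : ℝ)..((i + 1 : ℕ) : ℝ), cmpG ν α y ∧
    ∫ y in (i : ℝ)..((i + 1 : ℕ) : ℝ), cmpG ν α y ≤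
    1/2 * (exp (ν * (((i : ℝ) + 1/2) - ((i : ℝ) + 1/2) * log ((i : ℝ) + 1/2) + ((i : ℝ) + 1/2) * log α)
        + ν * (log ((i : ℝ) + 1/2) - log α))
      + exp (ν * (((i : ℝ) + 1/2) - ((i : ℝ) + 1/2) * log ((i : ℝ) + 1/2) + ((i : ℝ) + 1/2) * log α)
        - ν * (log ((i : ℝ) + 1/2) - log α))) := by
  have hc := cmpG_continuous ν α hα
  have hm1 : ((i : ℝ) + 1) / 2 ≤ (i : ℝ) + 1/2 := by
    have : (0:ℝ) ≤ i := by positivity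
    linarith
  have hm : (0:ℝ) < (i : ℝ) + 1/2 := by positivity
  have hint : ∫ y in (i : ℝ)..((i + 1 : ℕ) : ℝ), cmpG ν α y =
      ∫ s in (0:ℝ)..(1/2), (cmpG ν α (((i : ℝ) + 1/2) + s) + cmpG ν α (((i : ℝ) + 1/2) - s)) := by
    have i1 : IntervalIntegrable (fun s : ℝ => cmpG ν α (((i : ℝ) + 1/2) + s)) volume 0 (1/2) :=
      (hc.comp (by fun_prop : Continuous fun s : ℝ => ((i : ℝ) + 1/2) + s)).intervalIntegrable _ _
    have i2 : IntervalIntegrable (fun s : ℝ => cmpG ν α (((i : ℝ) + 1/2) - s)) volume 0 (1/2) :=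
      (hc.comp (by fun_prop : Continuous fun s : ℝ => ((i : ℝ) + 1/2) - s)).intervalIntegrable _ _
    rw [intervalIntegral.integral_add i1 i2,
      intervalIntegral.integral_comp_add_left (fun y => cmpG ν α y),
      intervalIntegral.integral_comp_sub_left (fun y => cmpG ν α y), add_comm (∫ x in _.._, cmpG ν α x),
      sub_zero, add_zero, intervalIntegral.integral_add_adjacent_intervals]
    · push_cast; congr 1 <;> ring
    · exact hc.intervalIntegrable _ _
    · exact hc.intervalIntegrable _ _
  rw [hint]
  have hci : IntervalIntegrable (fun s => cmpG ν α (((i : ℝ) + 1/2) + s) + cmpG ν α (((i : ℝ) + 1/2) - s))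
      volume 0 (1/2) := by
    apply Continuous.intervalIntegrable
    exact (hc.comp (by fun_prop : Continuous fun s : ℝ => ((i : ℝ) + 1/2) + s)).add
      (hc.comp (by fun_prop : Continuous fun s : ℝ => ((i : ℝ) + 1/2) - s))
  have hi0 : (0:ℝ) ≤ i := by positivity
  set m : ℝ := (i : ℝ) + 1/2 with hmd
  set g := ν * (m - m * log m + m * log α) with hg
  set l := log m - log α with hl
  have hpt : ∀ s ∈ Set.Ioo (0:ℝ) (1/2), 2 * exp (g - ν / ((i : ℝ) + 1)) ≤
      cmpG ν α (m + s) + cmpG ν α (m - s) ∧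
      cmpG ν α (m + s) + cmpG ν α (m - s) ≤ exp (g + ν * l) + exp (g - ν * l) := by
    rintro s ⟨hs0, hs1⟩
    obtain ⟨h1, h2⟩ := cmpG_bounds ν α m s hν hα hm (by linarith)
    obtain ⟨h3, h4⟩ := cmpG_bounds ν α m (-s) hν hα hm (by linarith)
    rw [← hl, ← hg] at h1 h2 h3 h4
    rw [← sub_eq_add_neg] at h3 h4
    rw [neg_sq] at h3
    have cosh_eq : ∀ x : ℝ, exp (g - x) + exp (g + x) = exp g * (2 * cosh x) := by
      intro x; rw [Real.cosh_eq, sub_eq_add_neg, exp_add, exp_add]; ring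
    constructor
    · have hb : ν * (s ^ 2 / m) ≤ ν / ((i : ℝ) + 1) := by
        rw [div_eq_mul_one_div ν]
        refine mul_le_mul_of_nonneg_left ?_ hν.le
        rw [div_le_div_iff₀ hm (by positivity)]
        have hss : s ^ 2 ≤ 1 / 2 := by nlinarith
        nlinarith [mul_le_mul_of_nonneg_right hss (by linarith : (0:ℝ) ≤ (i : ℝ) + 1)]
      have e1 : exp (g - ν * (s * l) - ν * (s ^ 2 / m)) + exp (g - ν * (-s * l) - ν * (s ^ 2 / m))
          = (exp (g - ν * (s * l)) + exp (g + ν * (s * l))) * exp (- (ν * (s ^ 2 / m))) := by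
        rw [add_mul, ← exp_add, ← exp_add]; congr 2; ring
      have e2 : 2 * exp (g - ν / ((i : ℝ) + 1)) ≤
          (exp (g - ν * (s * l)) + exp (g + ν * (s * l))) * exp (- (ν * (s ^ 2 / m))) := by
        rw [cosh_eq, sub_eq_add_neg, exp_add]
        have := Real.one_le_cosh (ν * (s * l))
        have h5 : exp (-(ν / ((i : ℝ) + 1))) ≤ exp (- (ν * (s ^ 2 / m))) :=
          exp_le_exp.2 (by linarith)
        calc 2 * (exp g * exp (-(ν / ((i : ℝ) + 1)))) = exp g * (2 * 1) * exp (-(ν / ((i : ℝ) + 1))) := by ring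
          _ ≤ _ := by gcongr
      linarith
    · have e3 : exp (g - ν * (s * l)) + exp (g - ν * (-s * l)) = exp g * (2 * cosh (ν * (s * l))) := by
        rw [← cosh_eq]; congr 2; ring
      have e4 : exp (g + ν * l) + exp (g - ν * l) = exp g * (2 * cosh (ν * l)) := by
        rw [← cosh_eq]; ring
      have h5 : cosh (ν * (s * l)) ≤ cosh (ν * l) := by
        rw [Real.cosh_le_cosh, abs_mul, abs_mul, abs_mul]
        refine mul_le_mul_of_nonneg_left ?_ (abs_nonneg _)
        rw [abs_of_pos hs0]
        nlinarith [abs_nonneg l]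
      rw [e4]
      calc _ ≤ exp g * (2 * cosh (ν * (s * l))) := by linarith
        _ ≤ _ := by gcongr
  constructor
  · have := intervalIntegral.integral_mono_on_of_le_Ioo (by norm_num : (0:ℝ) ≤ 1/2)
      (intervalIntegrable_const (c := 2 * exp (g - ν / ((i : ℝ) + 1)))) hci (fun s hs => (hpt s hs).1)
    rw [intervalIntegral.integral_const, smul_eq_mul] at this
    linarith
  · have := intervalIntegral.integral_mono_on_of_le_Ioo (by norm_num : (0:ℝ) ≤ 1/2)
      hci (intervalIntegrable_const (c := exp (g + ν * l) + exp (g - ν * l))) (fun s hs => (hpt s hs).2)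
    rw [intervalIntegral.integral_const, smul_eq_mul] at this
    linarith

/-- majorant -/
noncomputable def cmpV (C ν α : ℝ) : ℕ → ℝ
  | 0 => cmpT ν α 0 * (1 + C)
  | (i + 1) => cmpT ν α i * (1 + C / ((i : ℝ) + 1))

lemma cmp_exp_le (B x : ℝ) (hx1 : 1 ≤ x) (hB : 0 < B) :
    exp (B / x) ≤ 1 + B * exp B / x := by
  have hx : 0 < x := by linarith
  have h1 : B / x ≤ B := div_le_self hB.le hx1
  have h2 := Real.add_one_le_exp (-(B / x))
  have h3 : exp (B / x) * exp (-(B / x)) = 1 := by rw [← exp_add]; simp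
  have h4 : exp (B / x) * (-(B / x) + 1) ≤ 1 := by
    exact (mul_le_mul_of_nonneg_left h2 (exp_pos _).le).trans h3.le
  have h5 : exp (B / x) * (B / x) ≤ exp B * (B / x) :=
    mul_le_mul_of_nonneg_right (exp_le_exp.2 h1) (by positivity)
  have : B * exp B / x = exp B * (B / x) := by ring
  rw [this]; linarith

lemma cmpG_piece_T (ν : ℝ) (hν : 0 < ν) : ∃ C : ℝ, 0 < C ∧ ∀ α : ℝ, 1 ≤ α → ∀ i : ℕ,
    cmpT ν α i * (1 - C / ((i : ℝ) + 1)) ≤ ∫ y in (i : ℝ)..((i + 1 : ℕ) : ℝ), cmpG ν α y ∧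
    ∫ y in (i : ℝ)..((i + 1 : ℕ) : ℝ), cmpG ν α y ≤
      1/2 * (cmpV C ν α i + cmpT ν α (i + 1) * (1 + C / ((i : ℝ) + 1))) := by
  obtain ⟨c, hc, hst⟩ := cmp_stirling
  set B := ν * (c + 1) with hB
  have hBpos : 0 < B := by positivity
  refine ⟨B * exp B, by positivity, fun α hα i => ?_⟩
  have hα0 : 0 < α := by linarith
  obtain ⟨h1, h2⟩ := cmpG_piece ν α hν hα0 i
  have hsi := abs_le.1 (hst i)
  have hi0 : (0:ℝ) ≤ i := by positivity
  have hm : (0:ℝ) < (i : ℝ) + 1/2 := by positivity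
  have hexp := cmp_exp_le B ((i : ℝ) + 1) (by linarith) hBpos
  have hBdiv : B / ((i : ℝ) + 1) = ν * (c / ((i : ℝ) + 1)) + ν / ((i : ℝ) + 1) := by
    rw [hB]; ring
  constructor
  · refine le_trans ?_ h1
    have h3 : 1 - B * exp B / ((i : ℝ) + 1) ≤ exp (-(B / ((i : ℝ) + 1))) := by
      have := Real.add_one_le_exp (-(B / ((i : ℝ) + 1)))
      have h4 : B / ((i : ℝ) + 1) ≤ B * exp B / ((i : ℝ) + 1) := by
        gcongr
        nlinarith [Real.add_one_le_exp B]
      linarith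
    refine (mul_le_mul_of_nonneg_left h3 (cmpT_pos _ _ _).le).trans ?_
    unfold cmpT
    rw [← exp_add]
    apply exp_le_exp.2
    have := mul_le_mul_of_nonneg_left hsi.1 hν.le
    rw [hBdiv]
    nlinarith
  · refine h2.trans ?_
    have hup := mul_le_mul_of_nonneg_left hsi.2 hν.le
    refine mul_le_mul_of_nonneg_left (add_le_add ?_ ?_) (by norm_num)
    · rcases i with _ | n
      · simp only [cmpV]
        have hexp' : exp B ≤ 1 + B * exp B := by simpa using hexp
        refine le_trans ?_ (mul_le_mul_of_nonneg_left hexp' (cmpT_pos _ _ _).le)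
        unfold cmpT
        rw [← exp_add]
        apply exp_le_exp.2
        have hla := Real.log_nonneg hα
        have hlh : log ((((0:ℕ):ℝ) + 1/2)) ≤ 0 := Real.log_nonpos (by norm_num) (by norm_num)
        have h6 := mul_le_mul_of_nonneg_left (sub_nonpos.2 (hlh.trans hla)) hν.le
        have h7 : B = ν * c + ν := by rw [hB]; ring
        have h8 : ν * (c / (((0:ℕ):ℝ) + 1)) = ν * c := by simp
        rw [h8] at hup
        rw [h7]
        nlinarith
      · simp only [cmpV]
        have hn0 : (0:ℝ) ≤ n := by positivity
        have hn1 : (0:ℝ) < (n:ℝ) + 1 := by positivity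
        have hexp' := cmp_exp_le B ((n : ℝ) + 1) (by linarith) hBpos
        refine le_trans ?_ (mul_le_mul_of_nonneg_left hexp' (cmpT_pos _ _ _).le)
        have hT : cmpT ν α n = cmpT ν α (n + 1) * exp (-(ν * (log α - log ((n : ℝ) + 1)))) := by
          rw [cmpT_succ, mul_assoc, ← exp_add]; simp
        rw [hT]
        unfold cmpT
        rw [← exp_add, ← exp_add]
        apply exp_le_exp.2
        have hlog : log (((n + 1 : ℕ) : ℝ) + 1/2) - log ((n : ℝ) + 1) ≤ 1 / ((n : ℝ) + 1) := by
          rw [← Real.log_div (by positivity) (by positivity)]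
          refine (Real.log_le_sub_one_of_pos (by positivity)).trans ?_
          rw [div_sub_one hn1.ne']
          gcongr
          push_cast; linarith
        have h6 := mul_le_mul_of_nonneg_left hlog hν.le
        have h7 : B / ((n : ℝ) + 1) = ν * (c / ((n : ℝ) + 1)) + ν * (1 / ((n : ℝ) + 1)) := by
          rw [hB]; ring
        have h8 : ν * (c / (((n + 1 : ℕ) : ℝ) + 1)) ≤ ν * (c / ((n : ℝ) + 1)) := by
          gcongr; linarith
        rw [h7]
        nlinarith
    · refine le_trans ?_ (mul_le_mul_of_nonneg_left hexp (cmpT_pos _ _ _).le)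
      rw [cmpT_succ]
      unfold cmpT
      rw [← exp_add, ← exp_add]
      apply exp_le_exp.2
      have hlog : log ((i : ℝ) + 1) - log ((i : ℝ) + 1/2) ≤ 1 / ((i : ℝ) + 1) := by
        rw [← Real.log_div (by positivity) (by positivity)]
        refine (Real.log_le_sub_one_of_pos (by positivity)).trans ?_
        rw [div_sub_one hm.ne', div_le_div_iff₀ hm (by positivity)]
        nlinarith
      have h6 := mul_le_mul_of_nonneg_left hlog hν.le
      have h7 : B / ((i : ℝ) + 1) = ν * (c / ((i : ℝ) + 1)) + ν * (1 / ((i : ℝ) + 1)) := by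
        rw [hB]; ring
      rw [h7]
      nlinarith

lemma cmp_main (ν : ℝ) (hν : 0 < ν) : ∃ C : ℝ, 0 < C ∧ ∀ α : ℝ, 1 ≤ α →
    |(∫ y in Set.Ioi (0:ℝ), cmpG ν α y) - ∑' i, cmpT ν α i| ≤ C / α * ∑' i, cmpT ν α i := by
  obtain ⟨C, hC, hpiece⟩ := cmpG_piece_T ν hν
  obtain ⟨A, hA, hmom⟩ := cmpT_inv_moment ν hν
  refine ⟨2 * C * A, by positivity, fun α hα => ?_⟩
  have hα0 : 0 < α := by linarith
  have hcont := cmpG_continuous ν α hα0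
  have hs := cmpT_summable ν α hν
  have hsd := cmpT_div_summable ν α hν
  set D := ∑' i, cmpT ν α i with hD
  set R := ∑' i : ℕ, cmpT ν α i / ((i : ℝ) + 1) with hR
  have hR0 : cmpT ν α 0 ≤ R := by
    have := hsd.le_tsum 0 (fun i _ => by have := cmpT_pos ν α i; positivity)
    simpa using this
  have hT0 := cmpT_pos ν α 0
  have hRD : R ≤ A / α * D := hmom α hα0
  -- lower sums
  have hlow : HasSum (fun i : ℕ => cmpT ν α i * (1 - C / ((i : ℝ) + 1))) (D - C * R) := by
    refine (hs.hasSum.sub (hsd.hasSum.mul_left C)).congr_fun ?_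
    intro i; ring
  -- V sums
  have hV : HasSum (cmpV C ν α) ((D + C * R) + cmpT ν α 0 * (1 + C)) := by
    have h1 : HasSum (fun i => cmpV C ν α (i + 1)) (D + C * R) := by
      refine (hs.hasSum.add (hsd.hasSum.mul_left C)).congr_fun ?_
      intro i; simp only [cmpV]; ring
    have := (hasSum_nat_add_iff 1).1 h1
    simpa [cmpV] using this
  have hs1 : HasSum (fun i => cmpT ν α (i + 1)) (D - cmpT ν α 0) := by
    have := (hasSum_nat_add_iff' 1).2 hs.hasSum
    simpa using this
  have hsd1 : HasSum (fun i : ℕ => cmpT ν α (i + 1) / (((i + 1 : ℕ) : ℝ) + 1)) (R - cmpT ν α 0) := by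
    have := (hasSum_nat_add_iff' 1).2 hsd.hasSum
    simpa using this
  have hW : HasSum (fun i : ℕ => cmpT ν α (i + 1) + 2 * C * (cmpT ν α (i + 1) / (((i + 1 : ℕ) : ℝ) + 1)))
      ((D - cmpT ν α 0) + 2 * C * (R - cmpT ν α 0)) := hs1.add (hsd1.mul_left (2 * C))
  have hU := (hV.add hW).mul_left (1/2)
  have hupp : ∀ i : ℕ, ∫ y in (i : ℝ)..((i + 1 : ℕ) : ℝ), cmpG ν α y ≤
      1/2 * (cmpV C ν α i + (cmpT ν α (i + 1) +
        2 * C * (cmpT ν α (i + 1) / (((i + 1 : ℕ) : ℝ) + 1)))) := by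
    intro i
    refine (hpiece α hα i).2.trans ?_
    have hT := cmpT_pos ν α (i + 1)
    have hi0 : (0:ℝ) ≤ i := by positivity
    have : cmpT ν α (i + 1) * (1 + C / ((i : ℝ) + 1)) ≤ (cmpT ν α (i + 1) +
        2 * C * (cmpT ν α (i + 1) / (((i + 1 : ℕ) : ℝ) + 1))) := by
      have h1 : C / ((i : ℝ) + 1) ≤ 2 * C / (((i + 1 : ℕ) : ℝ) + 1) := by
        rw [div_le_div_iff₀ (by positivity) (by positivity)]
        push_cast
        nlinarith
      have h2 := mul_le_mul_of_nonneg_left h1 hT.le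
      have h3 : 2 * C * (cmpT ν α (i + 1) / (((i + 1 : ℕ) : ℝ) + 1)) =
        cmpT ν α (i + 1) * (2 * C / (((i + 1 : ℕ) : ℝ) + 1)) := by ring
      rw [h3]; linarith
    linarith
  have hnn : ∀ i : ℕ, 0 ≤ ∫ y in (i : ℝ)..((i + 1 : ℕ) : ℝ), cmpG ν α y := fun i =>
    intervalIntegral.integral_nonneg (by push_cast; linarith) (fun y _ => (exp_pos _).le)
  have hIs : Summable (fun i : ℕ => ∫ y in (i : ℝ)..((i + 1 : ℕ) : ℝ), cmpG ν α y) :=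
    Summable.of_nonneg_of_le hnn hupp hU.summable
  have htend : Tendsto (fun n : ℕ => ∫ y in (0:ℝ)..(n : ℝ), cmpG ν α y) atTop
      (𝓝 (∑' i : ℕ, ∫ y in (i : ℝ)..((i + 1 : ℕ) : ℝ), cmpG ν α y)) := by
    refine hIs.hasSum.tendsto_sum_nat.congr fun n => ?_
    have := intervalIntegral.sum_integral_adjacent_intervals (f := cmpG ν α) (μ := volume)
      (a := fun k : ℕ => (k : ℝ)) (n := n) (fun k _ => hcont.intervalIntegrable _ _)
    simpa using this
  have hint : IntegrableOn (cmpG ν α) (Set.Ioi 0) := by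
    refine integrableOn_Ioi_of_intervalIntegral_norm_tendsto _ 0
      (fun n : ℕ => (hcont.integrableOn_Icc).mono_set Set.Ioc_subset_Icc_self)
      tendsto_natCast_atTop_atTop (htend.congr fun n => ?_)
    apply intervalIntegral.integral_congr
    intro y _
    exact (Real.norm_of_nonneg (exp_pos _).le).symm
  have hval : (∫ y in Set.Ioi (0:ℝ), cmpG ν α y) =
      ∑' i : ℕ, ∫ y in (i : ℝ)..((i + 1 : ℕ) : ℝ), cmpG ν α y :=
    tendsto_nhds_unique
      (intervalIntegral_tendsto_integral_Ioi 0 hint tendsto_natCast_atTop_atTop) htend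
  rw [hval]
  have hL := hasSum_le (fun i => (hpiece α hα i).1) hlow hIs.hasSum
  have hH := hasSum_le hupp hIs.hasSum hU
  have hfin : 2 * C * A / α * D = 2 * C * (A / α * D) := by ring
  rw [hfin]
  have hCR : C * R ≤ C * (A / α * D) := mul_le_mul_of_nonneg_left hRD hC.le
  have hCT : C * cmpT ν α 0 ≤ C * R := mul_le_mul_of_nonneg_left hR0 hC.le
  have hCT0 : 0 < C * cmpT ν α 0 := by positivity
  rw [abs_le]
  constructor <;> nlinarith

lemma cmpG_scale (ν α : ℝ) (hν : 0 < ν) (hα : 0 < α) :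
    (∫ y in Set.Ioi (0:ℝ), cmpG 1 (ν * α) y) = ν * ∫ y in Set.Ioi (0:ℝ), cmpG ν α y := by
  have h := MeasureTheory.integral_comp_mul_left_Ioi (cmpG 1 (ν * α)) 0 hν
  have e : ∀ y, cmpG 1 (ν * α) (ν * y) = cmpG ν α y := by
    intro y
    unfold cmpG
    rw [mul_div_mul_left _ _ hν.ne']
    congr 1; ring
  simp only [e, mul_zero, smul_eq_mul] at h
  rw [h, mul_inv_cancel_left₀ hν.ne']

lemma cmpT_one_sum (α : ℝ) (hα : 0 < α) :
    ∑' i, cmpT 1 α i = exp (1/2 * log α + 1/2 * log (2 * π) + α) := by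
  have h : ∀ i, cmpT 1 α i = exp (1/2 * log α + 1/2 * log (2 * π)) * (α ^ i / (i.factorial : ℝ)) := by
    intro i
    have : α ^ i / (i.factorial : ℝ) = exp (i * log α - log (i.factorial : ℝ)) := by
      rw [exp_sub, exp_log (by positivity), exp_nat_mul, exp_log hα]
    rw [this, ← exp_add]
    unfold cmpT
    congr 1; ring
  simp only [h]
  rw [tsum_mul_left, exp_add _ α]
  congr 1
  rw [Real.exp_eq_exp_ℝ, NormedSpace.exp_eq_tsum_div]

lemma cmpT_sum (ν lam : ℝ) (hν : 0 < ν) (hl : 0 < lam) :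
    ∑' i, cmpT ν (lam ^ (1 / ν)) i =
      exp (1/2 * log lam + ν / 2 * log (2 * π)) * cmpZ lam ν := by
  unfold cmpZ
  rw [← tsum_mul_left]
  congr 1
  funext i
  have : lam ^ i / (i.factorial : ℝ) ^ ν = exp (i * log lam - ν * log (i.factorial : ℝ)) := by
    rw [exp_sub, exp_nat_mul, exp_log hl, Real.rpow_def_of_pos (by positivity), mul_comm ν]
  rw [this, ← exp_add]
  unfold cmpT
  rw [Real.log_rpow hl]
  congr 1; field_simp; ring

/-- Leading-order asymptotics of the CMP normalizing constant:
`Z(λ,ν) = exp(ν λ^{1/ν}) / (λ^{(ν-1)/(2ν)} (2π)^{(ν-1)/2} √ν) (1 + O(λ^{-1/ν}))` as `λ → ∞`. -/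
theorem cmpZ_leading_asymptotic (ν : ℝ) (hν : 0 < ν) :
    ∃ C > (0 : ℝ), ∃ Λ > (0 : ℝ), ∀ lam : ℝ, lam ≥ Λ →
      |cmpZ lam ν * lam ^ ((ν - 1) / (2 * ν)) * (2 * Real.pi) ^ ((ν - 1) / 2) *
          Real.sqrt ν * Real.exp (-(ν * lam ^ (1 / ν))) - 1|
        ≤ C * lam ^ (-(1 / ν)) := by
  obtain ⟨C, hC, hmain⟩ := cmp_main ν hν
  obtain ⟨C1, hC1, hmain1⟩ := cmp_main 1 one_pos
  set α0 : ℝ := 1 + 1 / ν + 2 * C + C1 / ν with hα0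
  have hα0pos : 0 < α0 := by positivity
  refine ⟨C1 / ν + 4 * C, by positivity, α0 ^ ν, by positivity, fun lam hlam => ?_⟩
  have hl : 0 < lam := lt_of_lt_of_le (by positivity) hlam
  have hαge : α0 ≤ lam ^ (1 / ν) := by
    have := Real.rpow_le_rpow (by positivity) hlam (by positivity : 0 ≤ 1 / ν)
    rwa [← Real.rpow_mul hα0pos.le, mul_one_div_cancel hν.ne', Real.rpow_one] at this
  have hsum := cmpT_sum ν lam hν hl
  have hlogα : log (lam ^ (1 / ν)) = 1 / ν * log lam := Real.log_rpow hl _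
  rw [Real.rpow_neg hl.le]
  set α := lam ^ (1 / ν) with hα
  have hαpos : 0 < α := lt_of_lt_of_le hα0pos hαge
  have p1 : 0 < 1 / ν := by positivity
  have p2 : 0 < C1 / ν := by positivity
  have ha1 : 1 ≤ α := by linarith
  have haν : 1 ≤ ν * α := by
    have : 1 / ν ≤ α := by linarith
    rw [div_le_iff₀ hν] at this; linarith
  have haC : C / α ≤ 1 / 2 := by
    rw [div_le_iff₀ hαpos]; linarith
  have haC1 : C1 / (ν * α) ≤ 1 := by
    rw [← div_div, div_le_iff₀ hαpos]; linarith
  have m1 := hmain α ha1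
  have m2 := hmain1 (ν * α) haν
  rw [cmpG_scale ν α hν hαpos, cmpT_one_sum _ (by positivity)] at m2
  set P := exp (1/2 * log α + 1/2 * log (2 * π) - 1/2 * log ν + ν * α) with hP
  have hPpos : 0 < P := exp_pos _
  have eP : exp (1/2 * log (ν * α) + 1/2 * log (2 * π) + ν * α) = ν * P := by
    have h0 : ν * P = exp (log ν) * P := by rw [exp_log hν]
    rw [h0, hP, ← exp_add, Real.log_mul hν.ne' hαpos.ne']
    congr 1; ring
  rw [eP] at m2
  set I := ∫ y in Set.Ioi (0:ℝ), cmpG ν α y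
  set D := ∑' i, cmpT ν α i with hD
  have m3 : |I - P| ≤ C1 / (ν * α) * P := by
    have : ν * I - ν * P = ν * (I - P) := by ring
    rw [this, abs_mul, abs_of_pos hν] at m2
    have h' : ν * |I - P| ≤ ν * (C1 / (ν * α) * P) := by linarith
    exact le_of_mul_le_mul_left h' hν
  have eQ : cmpZ lam ν * lam ^ ((ν - 1) / (2 * ν)) * (2 * Real.pi) ^ ((ν - 1) / 2) *
          Real.sqrt ν * Real.exp (-(ν * α)) = D / P := by
    rw [hsum, hP, Real.sqrt_eq_rpow, Real.rpow_def_of_pos hl, Real.rpow_def_of_pos (by positivity),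
      Real.rpow_def_of_pos hν, mul_assoc, mul_assoc, mul_assoc, ← exp_add, ← exp_add, ← exp_add,
      mul_comm (exp _) (cmpZ lam ν), mul_div_assoc, ← exp_sub, hlogα]
    congr 2
    field_simp
    ring
  rw [eQ]
  have hQ : D = D / P * P := by field_simp
  set Q := D / P
  rw [abs_le] at m1 m3
  have hDpos : 0 ≤ D := tsum_nonneg fun i => (cmpT_pos _ _ _).le
  have hDle : D ≤ 4 * P := by
    have q1 := mul_le_mul_of_nonneg_right haC hDpos
    have q2 := mul_le_mul_of_nonneg_right haC1 hPpos.le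
    linarith [m1.1, m3.2]
  have hCD : C / α * D ≤ C / α * (4 * P) := mul_le_mul_of_nonneg_left hDle (by positivity)
  have hres : |D - P| ≤ (C1 / (ν * α) + C / α * 4) * P := by
    rw [abs_le]; constructor <;> linarith [m1.1, m1.2, m3.1, m3.2]
  have hQ1 : D - P = (Q - 1) * P := by rw [hQ]; ring
  rw [hQ1, abs_mul, abs_of_pos hPpos] at hres
  have := le_of_mul_le_mul_right hres hPpos
  refine this.trans (le_of_eq ?_)
  field_simp
end

section
/- Fix ν > 0, and set c₁ = (ν²−1)/24 and c₂ = (ν²−1)(ν²+23)/1152. Then as λ → ∞, Z(λ,ν) = exp(ν·λ^(1/ν)) / (λ^((ν-1)/(2ν)) · (2π)^((ν-1)/2) · √ν) · (1 + c₁·(ν·λ^(1/ν))^(−1) + c₂·(ν·λ^(1/ν))^(−2) + O(λ^(−3/ν))). Precisely: there exist constants C > 0 and Λ > 0 (depending only on ν) such that for all λ ≥ Λ, |Z(λ,ν) · λ^((ν-1)/(2ν)) · (2π)^((ν-1)/2) · √ν · exp(−ν·λ^(1/ν)) − (1 + c₁·(ν·λ^(1/ν))^(−1) + c₂·(ν·λ^(1/ν))^(−2))|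 ≤ C·λ^(−3/ν). -/
open scoped BigOperators

/-- Elimination multiplier of the `0`-th moment equation. -/
noncomputable def elP0 (ν ε : ℝ) : ℝ :=
    0 - 23 / 280 * ε ^ 3 - 7 / 120 * ν ^ 1 * ε ^ 2 - 1 / 6 * ν ^ 2 * ε ^ 1 + 7 / 90 * ν ^ 2 * ε ^ 3
      + 1 * ν ^ 3 + 1 / 24 * ν ^ 3 * ε ^ 2 + 1 / 6 * ν ^ 4 * ε ^ 1 + 1 / 360 * ν ^ 4 * ε ^ 3
      + 1 / 60 * ν ^ 5 * ε ^ 2 + 1 / 630 * ν ^ 6 * ε ^ 3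

/-- Elimination multiplier of the `1`-th moment equation. -/
noncomputable def elP1 (ν ε : ℝ) : ℝ :=
    0 - 799 / 720 * ε ^ 3 + 1 / 24 * ν ^ 1 * ε ^ 2 + 23 / 560 * ν ^ 1 * ε ^ 3
      + 1 / 24 * ν ^ 2 * ε ^ 1 + 7 / 240 * ν ^ 2 * ε ^ 2 + 3979 / 2880 * ν ^ 2 * ε ^ 3
      + 1 / 2 * ν ^ 3 + 1 / 12 * ν ^ 3 * ε ^ 1 - 1 / 48 * ν ^ 3 * ε ^ 2 - 7 / 180 * ν ^ 3 * ε ^ 3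
      - 1 / 2 * ν ^ 4 - 1 / 24 * ν ^ 4 * ε ^ 1 - 1 / 48 * ν ^ 4 * ε ^ 2
      - 397 / 1440 * ν ^ 4 * ε ^ 3 - 1 / 12 * ν ^ 5 * ε ^ 1 - 1 / 48 * ν ^ 5 * ε ^ 2
      - 1 / 720 * ν ^ 5 * ε ^ 3 - 1 / 120 * ν ^ 6 * ε ^ 2 + 11 / 2880 * ν ^ 6 * ε ^ 3
      - 1 / 1260 * ν ^ 7 * ε ^ 3

/-- Elimination multiplier of the `2`-th moment equation. -/
noncomputable def elP2 (ν ε : ℝ) : ℝ :=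
    0 - 98531 / 151200 * ε ^ 3 - 23 / 560 * ν ^ 1 * ε ^ 2 + 2693 / 5040 * ν ^ 1 * ε ^ 3
      - 7 / 240 * ν ^ 2 * ε ^ 1 - 17 / 480 * ν ^ 2 * ε ^ 2 + 8959 / 13440 * ν ^ 2 * ε ^ 3
      - 1 / 12 * ν ^ 3 - 1 / 16 * ν ^ 3 * ε ^ 1 + 1 / 80 * ν ^ 3 * ε ^ 2
      - 1289 / 1920 * ν ^ 3 * ε ^ 3 + 1 / 48 * ν ^ 4 * ε ^ 1 + 1 / 48 * ν ^ 4 * ε ^ 2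
      - 221 / 14400 * ν ^ 4 * ε ^ 3 + 1 / 12 * ν ^ 5 + 1 / 16 * ν ^ 5 * ε ^ 1
      + 7 / 240 * ν ^ 5 * ε ^ 2 + 133 / 960 * ν ^ 5 * ε ^ 3 + 1 / 120 * ν ^ 6 * ε ^ 1
      + 7 / 480 * ν ^ 6 * ε ^ 2 + 79 / 120960 * ν ^ 6 * ε ^ 3 - 1 / 1680 * ν ^ 7 * ε ^ 2
      - 61 / 40320 * ν ^ 7 * ε ^ 3 - 1 / 4200 * ν ^ 8 * ε ^ 3

/-- Elimination multiplier of the `3`-th moment equation. -/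
noncomputable def elP3 (ν ε : ℝ) : ℝ :=
    0 + 22567 / 56700 * ε ^ 3 - 2693 / 7560 * ν ^ 1 * ε ^ 2 + 2347 / 37800 * ν ^ 1 * ε ^ 3
      + 17 / 720 * ν ^ 2 * ε ^ 1 + 41 / 1008 * ν ^ 2 * ε ^ 2 - 38011 / 36288 * ν ^ 2 * ε ^ 3
      + 1 / 24 * ν ^ 3 + 19 / 360 * ν ^ 3 * ε ^ 1 + 1379 / 2880 * ν ^ 3 * ε ^ 2
      - 37 / 8640 * ν ^ 3 * ε ^ 3 - 1 / 72 * ν ^ 4 * ε ^ 1 - 1 / 48 * ν ^ 4 * ε ^ 2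
      + 16993 / 21600 * ν ^ 4 * ε ^ 3 - 1 / 24 * ν ^ 5 - 1 / 18 * ν ^ 5 * ε ^ 1
      - 61 / 480 * ν ^ 5 * ε ^ 2 - 421 / 7200 * ν ^ 5 * ε ^ 3 - 7 / 720 * ν ^ 6 * ε ^ 1
      - 1 / 48 * ν ^ 6 * ε ^ 2 - 5155 / 36288 * ν ^ 6 * ε ^ 3 + 1 / 360 * ν ^ 7 * ε ^ 1
      + 271 / 60480 * ν ^ 7 * ε ^ 2 + 29 / 60480 * ν ^ 7 * ε ^ 3 + 1 / 1008 * ν ^ 8 * ε ^ 2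
      + 1093 / 226800 * ν ^ 8 * ε ^ 3 + 1 / 5400 * ν ^ 9 * ε ^ 3

/-- Elimination multiplier of the `4`-th moment equation. -/
noncomputable def elP4 (ν ε : ℝ) : ℝ :=
    0 + 7351 / 151200 * ε ^ 3 - 2347 / 75600 * ν ^ 1 * ε ^ 2 - 67943 / 362880 * ν ^ 1 * ε ^ 3
      - 41 / 2016 * ν ^ 2 * ε ^ 1 + 929 / 6048 * ν ^ 2 * ε ^ 2 - 2087 / 86400 * ν ^ 2 * ε ^ 3
      - 19 / 720 * ν ^ 3 - 3 / 64 * ν ^ 3 * ε ^ 1 - 169 / 5040 * ν ^ 3 * ε ^ 2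
      + 124465 / 290304 * ν ^ 3 * ε ^ 3 + 1 / 96 * ν ^ 4 * ε ^ 1 - 2 / 9 * ν ^ 4 * ε ^ 2
      - 64453 / 604800 * ν ^ 4 * ε ^ 3 + 1 / 36 * ν ^ 5 + 5 / 96 * ν ^ 5 * ε ^ 1
      + 1021 / 14400 * ν ^ 5 * ε ^ 2 - 20611 / 69120 * ν ^ 5 * ε ^ 3 + 1 / 96 * ν ^ 6 * ε ^ 1
      + 7 / 96 * ν ^ 6 * ε ^ 2 + 55163 / 604800 * ν ^ 6 * ε ^ 3 - 1 / 720 * ν ^ 7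
      - 1 / 192 * ν ^ 7 * ε ^ 1 - 191 / 30240 * ν ^ 7 * ε ^ 2 + 17155 / 290304 * ν ^ 7 * ε ^ 3
      - 1 / 2016 * ν ^ 8 * ε ^ 1 - 13 / 3024 * ν ^ 8 * ε ^ 2 - 793 / 86400 * ν ^ 8 * ε ^ 3
      - 1 / 100800 * ν ^ 9 * ε ^ 2 - 3497 / 1451520 * ν ^ 9 * ε ^ 3 + 23 / 302400 * ν ^ 10 * ε ^ 3

/-- Elimination multiplier of the `5`-th moment equation. -/
noncomputable def elP5 (ν ε : ℝ) : ℝ :=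
    0 - 343037 / 5443200 * ε ^ 3 + 67943 / 907200 * ν ^ 1 * ε ^ 2 + 32237 / 604800 * ν ^ 1 * ε ^ 3
      - 929 / 15120 * ν ^ 2 * ε ^ 1 - 5609 / 100800 * ν ^ 2 * ε ^ 2
      + 640741 / 3110400 * ν ^ 2 * ε ^ 3 + 3 / 160 * ν ^ 3 + 863 / 20160 * ν ^ 3 * ε ^ 1
      - 24893 / 145152 * ν ^ 3 * ε ^ 2 - 55211 / 345600 * ν ^ 3 * ε ^ 3 + 4 / 45 * ν ^ 4 * ε ^ 1
      + 5 / 42 * ν ^ 4 * ε ^ 2 - 646393 / 2721600 * ν ^ 4 * ε ^ 3 - 1 / 48 * ν ^ 5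
      - 1 / 20 * ν ^ 5 * ε ^ 1 + 20611 / 172800 * ν ^ 5 * ε ^ 2 + 44411 / 268800 * ν ^ 5 * ε ^ 3
      - 7 / 240 * ν ^ 6 * ε ^ 1 - 57 / 800 * ν ^ 6 * ε ^ 2 + 1192783 / 10886400 * ν ^ 6 * ε ^ 3
      + 1 / 480 * ν ^ 7 + 7 / 960 * ν ^ 7 * ε ^ 1 - 3431 / 145152 * ν ^ 7 * ε ^ 2
      - 155891 / 2419200 * ν ^ 7 * ε ^ 3 + 13 / 7560 * ν ^ 8 * ε ^ 1 + 1 / 126 * ν ^ 8 * ε ^ 2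
      - 12061 / 777600 * ν ^ 8 * ε ^ 3 - 1 / 10080 * ν ^ 9 * ε ^ 1
      + 3497 / 3628800 * ν ^ 9 * ε ^ 2 + 1979 / 345600 * ν ^ 9 * ε ^ 3
      - 1 / 11200 * ν ^ 10 * ε ^ 2 + 10247 / 21772800 * ν ^ 10 * ε ^ 3
      - 11 / 201600 * ν ^ 11 * ε ^ 3

/-- Elimination multiplier of the `6`-th moment equation. -/
noncomputable def elP6 (ν ε : ℝ) : ℝ :=
    0 + 3390449 / 381024000 * ε ^ 3 - 32237 / 1814400 * ν ^ 1 * ε ^ 2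
      + 5609 / 302400 * ν ^ 2 * ε ^ 1 - 283391 / 6220800 * ν ^ 2 * ε ^ 3 - 863 / 60480 * ν ^ 3
      + 55211 / 1036800 * ν ^ 3 * ε ^ 2 - 5 / 126 * ν ^ 4 * ε ^ 1 + 33223 / 425250 * ν ^ 4 * ε ^ 3
      + 1 / 60 * ν ^ 5 - 44411 / 806400 * ν ^ 5 * ε ^ 2 + 19 / 800 * ν ^ 6 * ε ^ 1
      - 8585201 / 152409600 * ν ^ 6 * ε ^ 3 - 7 / 2880 * ν ^ 7 + 155891 / 7257600 * ν ^ 7 * ε ^ 2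
      - 1 / 378 * ν ^ 8 * ε ^ 1 + 31147 / 1944000 * ν ^ 8 * ε ^ 3 + 1 / 30240 * ν ^ 9
      - 1979 / 1036800 * ν ^ 9 * ε ^ 2 + 1 / 33600 * ν ^ 10 * ε ^ 1
      - 50977 / 43545600 * ν ^ 10 * ε ^ 3 + 11 / 604800 * ν ^ 11 * ε ^ 2
      + 409 / 42336000 * ν ^ 12 * ε ^ 3

/-- Elimination remainder attached to the `0`-th moment. -/
noncomputable def elQ0 (ν ε : ℝ) : ℝ :=
    0 + 799 / 720 + 98531 / 151200 * ε ^ 1 - 22567 / 56700 * ε ^ 2 - 7351 / 151200 * ε ^ 3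
      + 343037 / 5443200 * ε ^ 4 - 3390449 / 381024000 * ε ^ 5 - 2693 / 15120 * ν ^ 1 * ε ^ 1
      - 2347 / 75600 * ν ^ 1 * ε ^ 2 + 67943 / 604800 * ν ^ 1 * ε ^ 3
      - 32237 / 907200 * ν ^ 1 * ε ^ 4 - 263 / 192 * ν ^ 2 - 27697 / 40320 * ν ^ 2 * ε ^ 1
      + 173333 / 181440 * ν ^ 2 * ε ^ 2 + 7409 / 120960 * ν ^ 2 * ε ^ 3
      - 640741 / 3110400 * ν ^ 2 * ε ^ 4 + 283391 / 6220800 * ν ^ 2 * ε ^ 5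
      + 1271 / 5760 * ν ^ 3 * ε ^ 1 + 187 / 20160 * ν ^ 3 * ε ^ 2 - 24893 / 96768 * ν ^ 3 * ε ^ 3
      + 55211 / 518400 * ν ^ 3 * ε ^ 4 + 43 / 160 * ν ^ 4 + 371 / 14400 * ν ^ 4 * ε ^ 1
      - 14113 / 21600 * ν ^ 4 * ε ^ 2 + 16453 / 604800 * ν ^ 4 * ε ^ 3
      + 646393 / 2721600 * ν ^ 4 * ε ^ 4 - 33223 / 425250 * ν ^ 4 * ε ^ 5
      - 41 / 960 * ν ^ 5 * ε ^ 1 + 301 / 14400 * ν ^ 5 * ε ^ 2 + 20611 / 115200 * ν ^ 5 * ε ^ 3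
      - 44411 / 403200 * ν ^ 5 * ε ^ 4 - 5 / 576 * ν ^ 6 + 1181 / 120960 * ν ^ 6 * ε ^ 1
      + 17837 / 181440 * ν ^ 6 * ε ^ 2 - 5287 / 120960 * ν ^ 6 * ε ^ 3
      - 1192783 / 10886400 * ν ^ 6 * ε ^ 4 + 8585201 / 152409600 * ν ^ 6 * ε ^ 5
      + 19 / 120960 * ν ^ 7 * ε ^ 1 + 59 / 60480 * ν ^ 7 * ε ^ 2 - 3431 / 96768 * ν ^ 7 * ε ^ 3
      + 155891 / 3628800 * ν ^ 7 * ε ^ 4 - 13 / 50400 * ν ^ 8 * ε ^ 1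
      - 127 / 56700 * ν ^ 8 * ε ^ 2 + 2351 / 604800 * ν ^ 8 * ε ^ 3
      + 12061 / 777600 * ν ^ 8 * ε ^ 4 - 31147 / 1944000 * ν ^ 8 * ε ^ 5
      - 11 / 100800 * ν ^ 9 * ε ^ 2 + 3497 / 2419200 * ν ^ 9 * ε ^ 3
      - 1979 / 518400 * ν ^ 9 * ε ^ 4 - 1 / 60480 * ν ^ 10 * ε ^ 3
      - 10247 / 21772800 * ν ^ 10 * ε ^ 4 + 50977 / 43545600 * ν ^ 10 * ε ^ 5
      + 11 / 302400 * ν ^ 11 * ε ^ 4 - 409 / 42336000 * ν ^ 12 * ε ^ 5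

/-- Elimination remainder attached to the `1`-th moment. -/
noncomputable def elQ1 (ν ε : ℝ) : ℝ :=
    0 + 98531 / 75600 - 22567 / 18900 * ε ^ 1 - 7351 / 37800 * ε ^ 2 + 343037 / 1088640 * ε ^ 3
      - 3390449 / 63504000 * ε ^ 4 - 2347 / 37800 * ν ^ 1 * ε ^ 1 + 67943 / 181440 * ν ^ 1 * ε ^ 2
      - 32237 / 201600 * ν ^ 1 * ε ^ 3 - 27697 / 20160 * ν ^ 2 + 34295 / 12096 * ν ^ 2 * ε ^ 1
      + 79699 / 302400 * ν ^ 2 * ε ^ 2 - 640741 / 622080 * ν ^ 2 * ε ^ 3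
      + 283391 / 1036800 * ν ^ 2 * ε ^ 4 + 187 / 10080 * ν ^ 3 * ε ^ 1
      - 124465 / 145152 * ν ^ 3 * ε ^ 2 + 55211 / 115200 * ν ^ 3 * ε ^ 3 + 371 / 7200 * ν ^ 4
      - 13793 / 7200 * ν ^ 4 * ε ^ 1 + 10453 / 151200 * ν ^ 4 * ε ^ 2
      + 646393 / 544320 * ν ^ 4 * ε ^ 3 - 33223 / 70875 * ν ^ 4 * ε ^ 4
      + 301 / 7200 * ν ^ 5 * ε ^ 1 + 20611 / 34560 * ν ^ 5 * ε ^ 2 - 44411 / 89600 * ν ^ 5 * ε ^ 3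
      + 1181 / 60480 * ν ^ 6 + 3391 / 12096 * ν ^ 6 * ε ^ 1 - 5711 / 37800 * ν ^ 6 * ε ^ 2
      - 1192783 / 2177280 * ν ^ 6 * ε ^ 3 + 8585201 / 25401600 * ν ^ 6 * ε ^ 4
      + 59 / 30240 * ν ^ 7 * ε ^ 1 - 17155 / 145152 * ν ^ 7 * ε ^ 2
      + 155891 / 806400 * ν ^ 7 * ε ^ 3 - 13 / 25200 * ν ^ 8 - 443 / 75600 * ν ^ 8 * ε ^ 1
      + 1951 / 151200 * ν ^ 8 * ε ^ 2 + 12061 / 155520 * ν ^ 8 * ε ^ 3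
      - 31147 / 324000 * ν ^ 8 * ε ^ 4 - 11 / 50400 * ν ^ 9 * ε ^ 1
      + 3497 / 725760 * ν ^ 9 * ε ^ 2 - 1979 / 115200 * ν ^ 9 * ε ^ 3
      - 11 / 302400 * ν ^ 10 * ε ^ 2 - 10247 / 4354560 * ν ^ 10 * ε ^ 3
      + 50977 / 7257600 * ν ^ 10 * ε ^ 4 + 11 / 67200 * ν ^ 11 * ε ^ 3
      - 409 / 7056000 * ν ^ 12 * ε ^ 4

/-- Elimination remainder attached to the `2`-th moment. -/
noncomputable def elQ2 (ν ε : ℝ) : ℝ :=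
    0 - 22567 / 18900 - 7351 / 25200 * ε ^ 1 + 343037 / 544320 * ε ^ 2 - 3390449 / 25401600 * ε ^ 3
      + 67943 / 181440 * ν ^ 1 * ε ^ 1 - 32237 / 120960 * ν ^ 1 * ε ^ 2 + 34295 / 12096 * ν ^ 2
      + 7109 / 16800 * ν ^ 2 * ε ^ 1 - 640741 / 311040 * ν ^ 2 * ε ^ 2
      + 283391 / 414720 * ν ^ 2 * ε ^ 3 - 124465 / 145152 * ν ^ 3 * ε ^ 1
      + 55211 / 69120 * ν ^ 3 * ε ^ 2 - 13793 / 7200 * ν ^ 4 + 4453 / 100800 * ν ^ 4 * ε ^ 1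
      + 646393 / 272160 * ν ^ 4 * ε ^ 2 - 33223 / 28350 * ν ^ 4 * ε ^ 3
      + 20611 / 34560 * ν ^ 5 * ε ^ 1 - 44411 / 53760 * ν ^ 5 * ε ^ 2 + 3391 / 12096 * ν ^ 6
      - 19253 / 100800 * ν ^ 6 * ε ^ 1 - 1192783 / 1088640 * ν ^ 6 * ε ^ 2
      + 8585201 / 10160640 * ν ^ 6 * ε ^ 3 - 17155 / 145152 * ν ^ 7 * ε ^ 1
      + 155891 / 483840 * ν ^ 7 * ε ^ 2 - 443 / 75600 * ν ^ 8 + 517 / 33600 * ν ^ 8 * ε ^ 1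
      + 12061 / 77760 * ν ^ 8 * ε ^ 2 - 31147 / 129600 * ν ^ 8 * ε ^ 3
      + 3497 / 725760 * ν ^ 9 * ε ^ 1 - 1979 / 69120 * ν ^ 9 * ε ^ 2 - 1 / 100800 * ν ^ 10 * ε ^ 1
      - 10247 / 2177280 * ν ^ 10 * ε ^ 2 + 50977 / 2903040 * ν ^ 10 * ε ^ 3
      + 11 / 40320 * ν ^ 11 * ε ^ 2 - 409 / 2822400 * ν ^ 12 * ε ^ 3

/-- Elimination remainder attached to the `3`-th moment. -/
noncomputable def elQ3 (ν ε : ℝ) : ℝ :=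
    0 - 7351 / 37800 + 343037 / 544320 * ε ^ 1 - 3390449 / 19051200 * ε ^ 2
      - 32237 / 181440 * ν ^ 1 * ε ^ 1 + 7109 / 25200 * ν ^ 2 - 640741 / 311040 * ν ^ 2 * ε ^ 1
      + 283391 / 311040 * ν ^ 2 * ε ^ 2 + 55211 / 103680 * ν ^ 3 * ε ^ 1 + 4453 / 151200 * ν ^ 4
      + 646393 / 272160 * ν ^ 4 * ε ^ 1 - 66446 / 42525 * ν ^ 4 * ε ^ 2
      - 44411 / 80640 * ν ^ 5 * ε ^ 1 - 19253 / 151200 * ν ^ 6 - 1192783 / 1088640 * ν ^ 6 * ε ^ 1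
      + 8585201 / 7620480 * ν ^ 6 * ε ^ 2 + 155891 / 725760 * ν ^ 7 * ε ^ 1 + 517 / 50400 * ν ^ 8
      + 12061 / 77760 * ν ^ 8 * ε ^ 1 - 31147 / 97200 * ν ^ 8 * ε ^ 2
      - 1979 / 103680 * ν ^ 9 * ε ^ 1 - 1 / 151200 * ν ^ 10 - 10247 / 2177280 * ν ^ 10 * ε ^ 1
      + 50977 / 2177280 * ν ^ 10 * ε ^ 2 + 11 / 60480 * ν ^ 11 * ε ^ 1
      - 409 / 2116800 * ν ^ 12 * ε ^ 2

/-- Elimination remainder attached to the `4`-th moment. -/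
noncomputable def elQ4 (ν ε : ℝ) : ℝ :=
    0 + 343037 / 1088640 - 3390449 / 25401600 * ε ^ 1 - 640741 / 622080 * ν ^ 2
      + 283391 / 414720 * ν ^ 2 * ε ^ 1 + 646393 / 544320 * ν ^ 4 - 33223 / 28350 * ν ^ 4 * ε ^ 1
      - 1192783 / 2177280 * ν ^ 6 + 8585201 / 10160640 * ν ^ 6 * ε ^ 1 + 12061 / 155520 * ν ^ 8
      - 31147 / 129600 * ν ^ 8 * ε ^ 1 - 10247 / 4354560 * ν ^ 10
      + 50977 / 2903040 * ν ^ 10 * ε ^ 1 - 409 / 2822400 * ν ^ 12 * ε ^ 1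

/-- Elimination remainder attached to the `5`-th moment. -/
noncomputable def elQ5 (ν ε : ℝ) : ℝ :=
    0 - 3390449 / 63504000 + 283391 / 1036800 * ν ^ 2 - 33223 / 70875 * ν ^ 4
      + 8585201 / 25401600 * ν ^ 6 - 31147 / 324000 * ν ^ 8 + 50977 / 7257600 * ν ^ 10
      - 409 / 7056000 * ν ^ 12

/-- The generalized binomial coefficients `ν choose j`, `j ≤ 7`. -/
noncomputable def bc (ν : ℝ) : ℕ → ℝ
  | 0 => 1
  | 1 => ν
  | 2 => ν * (ν - 1) / 2
  | 3 => ν * (ν - 1) * (ν - 2) / 6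
  | 4 => ν * (ν - 1) * (ν - 2) * (ν - 3) / 24
  | 5 => ν * (ν - 1) * (ν - 2) * (ν - 3) * (ν - 4) / 120
  | 6 => ν * (ν - 1) * (ν - 2) * (ν - 3) * (ν - 4) * (ν - 5) / 720
  | 7 => ν * (ν - 1) * (ν - 2) * (ν - 3) * (ν - 4) * (ν - 5) * (ν - 6) / 5040
  | _ => 0

lemma elim_identity (ν ε : ℝ) (m r : ℕ → ℝ) (hm0 : m 0 = 1)
    (h0 : r 0 = bc ν 1 * m 1 + bc ν 2 * m 2 + bc ν 3 * m 3 + bc ν 4 * m 4 + bc ν 5 * m 5 + bc ν 6 * m 6 + bc ν 7 * m 7)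
    (h1 : r 1 = bc ν 1 * m 2 + bc ν 2 * m 3 + bc ν 3 * m 4 + bc ν 4 * m 5 + bc ν 5 * m 6 + bc ν 6 * m 7 -
      (1 * ε ^ 1 * m 0))
    (h2 : r 2 = bc ν 1 * m 3 + bc ν 2 * m 4 + bc ν 3 * m 5 + bc ν 4 * m 6 + bc ν 5 * m 7 -
      (1 * ε ^ 2 * m 0 + 2 * ε ^ 1 * m 1))
    (h3 : r 3 = bc ν 1 * m 4 + bc ν 2 * m 5 + bc ν 3 * m 6 + bc ν 4 * m 7 -
      (1 * ε ^ 3 * m 0 + 3 * ε ^ 2 * m 1 + 3 * ε ^ 1 * m 2))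
    (h4 : r 4 = bc ν 1 * m 5 + bc ν 2 * m 6 + bc ν 3 * m 7 -
      (1 * ε ^ 4 * m 0 + 4 * ε ^ 3 * m 1 + 6 * ε ^ 2 * m 2 + 4 * ε ^ 1 * m 3))
    (h5 : r 5 = bc ν 1 * m 6 + bc ν 2 * m 7 -
      (1 * ε ^ 5 * m 0 + 5 * ε ^ 4 * m 1 + 10 * ε ^ 3 * m 2 + 10 * ε ^ 2 * m 3 + 5 * ε ^ 1 * m 4))
    (h6 : r 6 = bc ν 1 * m 7 -
      (1 * ε ^ 6 * m 0 + 6 * ε ^ 5 * m 1 + 15 * ε ^ 4 * m 2 + 20 * ε ^ 3 * m 3 + 15 * ε ^ 2 * m 4 + 6 * ε ^ 1 * m 5)) :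
    ν ^ 4 * m 1 - (-(ν - 1) * ν ^ 3 / 2 * ε - (ν ^ 2 - 1) * ν ^ 2 / 24 * ε ^ 2 - (ν ^ 2 - 1) * ν / 24 * ε ^ 3) =
    elP0 ν ε * r 0 + elP1 ν ε * r 1 + elP2 ν ε * r 2 + elP3 ν ε * r 3 + elP4 ν ε * r 4 +
      elP5 ν ε * r 5 + elP6 ν ε * r 6 -
      ε ^ 4 * (elQ0 ν ε * m 0 + elQ1 ν ε * m 1 + elQ2 ν ε * m 2 + elQ3 ν ε * m 3 + elQ4 ν ε * m 4 +
        elQ5 ν ε * m 5) := by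
  rw [h0, h1, h2, h3, h4, h5, h6, hm0]
  simp only [bc, elP0, elP1, elP2, elP3, elP4, elP5, elP6, elQ0, elQ1, elQ2, elQ3, elQ4, elQ5]
  ring

lemma bdd_Icc (f : ℝ → ℝ) (hf : Continuous f) :
    ∃ A, ∀ ε, 0 ≤ ε → ε ≤ 1 → |f ε| ≤ A := by
  obtain ⟨A, hA⟩ := (isCompact_Icc (a := (0 : ℝ)) (b := 1)).exists_bound_of_continuousOn
    hf.continuousOn
  exact ⟨A, fun ε h0 h1 => hA ε ⟨h0, h1⟩⟩

lemma elim_bound (ν : ℝ) (hν : ν ≠ 0) (K : ℝ) : ∃ C : ℝ, ∀ (ε : ℝ) (m r : ℕ → ℝ), 0 < ε → ε ≤ 1 →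
    (∀ l ≤ 7, |m l| ≤ K) → (∀ k ≤ 6, |r k| ≤ K * ε ^ 4) → m 0 = 1 →
    (∀ k ≤ 6, r k = ∑ j ∈ Finset.range (7 - k), bc ν (j + 1) * m (k + (j + 1)) -
      ∑ l ∈ Finset.range k, (k.choose l : ℝ) * ε ^ (k - l) * m l) →
    |m 1 - (-(ν - 1) / (2 * ν) * ε - (ν ^ 2 - 1) / (24 * ν ^ 2) * ε ^ 2 -
      (ν ^ 2 - 1) / (24 * ν ^ 3) * ε ^ 3)| ≤ C * ε ^ 4 := by
  obtain ⟨A0, hA0⟩ := bdd_Icc (elP0 ν) (by unfold elP0; fun_prop)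
  obtain ⟨A1, hA1⟩ := bdd_Icc (elP1 ν) (by unfold elP1; fun_prop)
  obtain ⟨A2, hA2⟩ := bdd_Icc (elP2 ν) (by unfold elP2; fun_prop)
  obtain ⟨A3, hA3⟩ := bdd_Icc (elP3 ν) (by unfold elP3; fun_prop)
  obtain ⟨A4, hA4⟩ := bdd_Icc (elP4 ν) (by unfold elP4; fun_prop)
  obtain ⟨A5, hA5⟩ := bdd_Icc (elP5 ν) (by unfold elP5; fun_prop)
  obtain ⟨A6, hA6⟩ := bdd_Icc (elP6 ν) (by unfold elP6; fun_prop)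
  obtain ⟨B0, hB0⟩ := bdd_Icc (elQ0 ν) (by unfold elQ0; fun_prop)
  obtain ⟨B1, hB1⟩ := bdd_Icc (elQ1 ν) (by unfold elQ1; fun_prop)
  obtain ⟨B2, hB2⟩ := bdd_Icc (elQ2 ν) (by unfold elQ2; fun_prop)
  obtain ⟨B3, hB3⟩ := bdd_Icc (elQ3 ν) (by unfold elQ3; fun_prop)
  obtain ⟨B4, hB4⟩ := bdd_Icc (elQ4 ν) (by unfold elQ4; fun_prop)
  obtain ⟨B5, hB5⟩ := bdd_Icc (elQ5 ν) (by unfold elQ5; fun_prop)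
  refine ⟨(A0 + A1 + A2 + A3 + A4 + A5 + A6 + B0 + B1 + B2 + B3 + B4 + B5) * K / ν ^ 4, ?_⟩
  intro ε m r hε hε1 hm hr hm0 heq
  have h4p : 0 < ε ^ 4 := by positivity
  have hν4 : 0 < ν ^ 4 := by positivity
  have key := elim_identity ν ε m r hm0
    (by rw [heq _ (by norm_num)]; simp [Finset.sum_range_succ])
    (by rw [heq _ (by norm_num)]; simp [Finset.sum_range_succ])
    (by rw [heq _ (by norm_num)]; simp [Finset.sum_range_succ])
    (by rw [heq _ (by norm_num)]; simp [Finset.sum_range_succ, Nat.choose])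
    (by rw [heq _ (by norm_num)]; simp [Finset.sum_range_succ, Nat.choose])
    (by rw [heq _ (by norm_num)]; simp [Finset.sum_range_succ, Nat.choose])
    (by rw [heq _ (by norm_num)]; simp [Finset.sum_range_succ, Nat.choose])
  have e : m 1 - (-(ν - 1) / (2 * ν) * ε - (ν ^ 2 - 1) / (24 * ν ^ 2) * ε ^ 2 -
      (ν ^ 2 - 1) / (24 * ν ^ 3) * ε ^ 3) = (ν ^ 4 * m 1 - (-(ν - 1) * ν ^ 3 / 2 * ε - (ν ^ 2 - 1) * ν ^ 2 / 24 * ε ^ 2 - (ν ^ 2 - 1) * ν / 24 * ε ^ 3)) / ν ^ 4 := by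
    field_simp
  rw [e, key, abs_div, abs_of_pos hν4, div_le_iff₀ hν4]
  have e2 : (A0 + A1 + A2 + A3 + A4 + A5 + A6 + B0 + B1 + B2 + B3 + B4 + B5) * K / ν ^ 4 * ε ^ 4 *
      ν ^ 4 = (A0 + A1 + A2 + A3 + A4 + A5 + A6 + B0 + B1 + B2 + B3 + B4 + B5) * K * ε ^ 4 := by
    field_simp
  rw [e2]
  have a0 : |elP0 ν ε * r 0| ≤ A0 * (K * ε ^ 4) := by
    rw [abs_mul]; exact mul_le_mul (hA0 ε hε.le hε1) (hr 0 (by norm_num)) (abs_nonneg _)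
      ((abs_nonneg _).trans (hA0 ε hε.le hε1))
  have a1 : |elP1 ν ε * r 1| ≤ A1 * (K * ε ^ 4) := by
    rw [abs_mul]; exact mul_le_mul (hA1 ε hε.le hε1) (hr 1 (by norm_num)) (abs_nonneg _)
      ((abs_nonneg _).trans (hA1 ε hε.le hε1))
  have a2 : |elP2 ν ε * r 2| ≤ A2 * (K * ε ^ 4) := by
    rw [abs_mul]; exact mul_le_mul (hA2 ε hε.le hε1) (hr 2 (by norm_num)) (abs_nonneg _)
      ((abs_nonneg _).trans (hA2 ε hε.le hε1))
  have a3 : |elP3 ν ε * r 3| ≤ A3 * (K * ε ^ 4) := by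
    rw [abs_mul]; exact mul_le_mul (hA3 ε hε.le hε1) (hr 3 (by norm_num)) (abs_nonneg _)
      ((abs_nonneg _).trans (hA3 ε hε.le hε1))
  have a4 : |elP4 ν ε * r 4| ≤ A4 * (K * ε ^ 4) := by
    rw [abs_mul]; exact mul_le_mul (hA4 ε hε.le hε1) (hr 4 (by norm_num)) (abs_nonneg _)
      ((abs_nonneg _).trans (hA4 ε hε.le hε1))
  have a5 : |elP5 ν ε * r 5| ≤ A5 * (K * ε ^ 4) := by
    rw [abs_mul]; exact mul_le_mul (hA5 ε hε.le hε1) (hr 5 (by norm_num)) (abs_nonneg _)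
      ((abs_nonneg _).trans (hA5 ε hε.le hε1))
  have a6 : |elP6 ν ε * r 6| ≤ A6 * (K * ε ^ 4) := by
    rw [abs_mul]; exact mul_le_mul (hA6 ε hε.le hε1) (hr 6 (by norm_num)) (abs_nonneg _)
      ((abs_nonneg _).trans (hA6 ε hε.le hε1))
  have b0 : |ε ^ 4 * (elQ0 ν ε * m 0)| ≤ ε ^ 4 * (B0 * K) := by
    rw [abs_mul, abs_mul, abs_of_pos h4p]
    exact mul_le_mul_of_nonneg_left (mul_le_mul (hB0 ε hε.le hε1) (hm 0 (by norm_num))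
      (abs_nonneg _) ((abs_nonneg _).trans (hB0 ε hε.le hε1))) h4p.le
  have b1 : |ε ^ 4 * (elQ1 ν ε * m 1)| ≤ ε ^ 4 * (B1 * K) := by
    rw [abs_mul, abs_mul, abs_of_pos h4p]
    exact mul_le_mul_of_nonneg_left (mul_le_mul (hB1 ε hε.le hε1) (hm 1 (by norm_num))
      (abs_nonneg _) ((abs_nonneg _).trans (hB1 ε hε.le hε1))) h4p.le
  have b2 : |ε ^ 4 * (elQ2 ν ε * m 2)| ≤ ε ^ 4 * (B2 * K) := by
    rw [abs_mul, abs_mul, abs_of_pos h4p]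
    exact mul_le_mul_of_nonneg_left (mul_le_mul (hB2 ε hε.le hε1) (hm 2 (by norm_num))
      (abs_nonneg _) ((abs_nonneg _).trans (hB2 ε hε.le hε1))) h4p.le
  have b3 : |ε ^ 4 * (elQ3 ν ε * m 3)| ≤ ε ^ 4 * (B3 * K) := by
    rw [abs_mul, abs_mul, abs_of_pos h4p]
    exact mul_le_mul_of_nonneg_left (mul_le_mul (hB3 ε hε.le hε1) (hm 3 (by norm_num))
      (abs_nonneg _) ((abs_nonneg _).trans (hB3 ε hε.le hε1))) h4p.le
  have b4 : |ε ^ 4 * (elQ4 ν ε * m 4)| ≤ ε ^ 4 * (B4 * K) := by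
    rw [abs_mul, abs_mul, abs_of_pos h4p]
    exact mul_le_mul_of_nonneg_left (mul_le_mul (hB4 ε hε.le hε1) (hm 4 (by norm_num))
      (abs_nonneg _) ((abs_nonneg _).trans (hB4 ε hε.le hε1))) h4p.le
  have b5 : |ε ^ 4 * (elQ5 ν ε * m 5)| ≤ ε ^ 4 * (B5 * K) := by
    rw [abs_mul, abs_mul, abs_of_pos h4p]
    exact mul_le_mul_of_nonneg_left (mul_le_mul (hB5 ε hε.le hε1) (hm 5 (by norm_num))
      (abs_nonneg _) ((abs_nonneg _).trans (hB5 ε hε.le hε1))) h4p.le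
  rw [abs_le] at a0 a1 a2 a3 a4 a5 a6 b0 b1 b2 b3 b4 b5 ⊢
  constructor <;> linarith

/-- The `i`-th term of the series, parametrized by `x = λ ^ (1/ν)`. -/
noncomputable def wt (ν x : ℝ) (i : ℕ) : ℝ := (x ^ ν) ^ i / (i.factorial : ℝ) ^ ν

/-- Polynomially bounded sequences. -/
def PB (f : ℕ → ℝ) : Prop := ∃ (C : ℝ) (n : ℕ), ∀ i, |f i| ≤ C * ((i : ℝ) + 1) ^ n

/-- Weighted sum. -/
noncomputable def SS (ν x : ℝ) (f : ℕ → ℝ) : ℝ := ∑' i, wt ν x i * f i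

lemma fact_rpow_pos (ν : ℝ) (i : ℕ) : 0 < (i.factorial : ℝ) ^ ν :=
  Real.rpow_pos_of_pos (by exact_mod_cast i.factorial_pos) _

lemma wt_pos {ν x : ℝ} (hx : 0 < x) (i : ℕ) : 0 < wt ν x i :=
  div_pos (pow_pos (Real.rpow_pos_of_pos hx _) _) (fact_rpow_pos ν i)

lemma coef_summable {ν : ℝ} (hν : 0 < ν) {q : ℝ} (hq : 0 < q) (n : ℕ) :
    Summable (fun i : ℕ => q ^ i / (i.factorial : ℝ) ^ ν * ((i : ℝ) + 1) ^ n) := by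
  have hpos : ∀ i : ℕ, 0 < q ^ i / (i.factorial : ℝ) ^ ν * ((i : ℝ) + 1) ^ n := fun i =>
    mul_pos (div_pos (pow_pos hq _) (fact_rpow_pos ν i)) (by positivity)
  refine summable_of_ratio_test_tendsto_lt_one (l := 0) one_pos
    (Filter.Eventually.of_forall fun i => (hpos i).ne') ?_
  have h1 : Filter.Tendsto (fun i : ℕ => ((i : ℝ) + 1) ^ (-ν)) Filter.atTop (nhds 0) :=
    (tendsto_rpow_neg_atTop hν).comp
      (Filter.tendsto_atTop_add_const_right _ _ tendsto_natCast_atTop_atTop)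
  have h2 : Filter.Tendsto (fun i : ℕ => (1 + 1 / ((i : ℝ) + 1)) ^ n) Filter.atTop (nhds 1) := by
    have := (tendsto_one_div_add_atTop_nhds_zero_nat (𝕜 := ℝ)).const_add 1
    simpa using this.pow n
  have h3 := (h1.const_mul q).mul h2
  rw [mul_zero, zero_mul] at h3
  refine h3.congr fun i => ?_
  rw [Real.norm_of_nonneg (hpos _).le, Real.norm_of_nonneg (hpos _).le]
  have hi : (0 : ℝ) < (i : ℝ) + 1 := by positivity
  have hf := fact_rpow_pos ν i
  have e1 : (((i + 1).factorial : ℕ) : ℝ) ^ ν = ((i : ℝ) + 1) ^ ν * (i.factorial : ℝ) ^ ν := by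
    rw [Nat.factorial_succ]; push_cast
    rw [Real.mul_rpow hi.le (by positivity)]
  have hp := Real.rpow_pos_of_pos hi ν
  rw [e1, Real.rpow_neg hi.le]
  push_cast
  have e2 : (1 + 1 / ((i : ℝ) + 1)) ^ n = ((i : ℝ) + 1 + 1) ^ n / ((i : ℝ) + 1) ^ n := by
    rw [← div_pow]; congr 1; field_simp
  rw [e2, pow_succ]
  field_simp

lemma PB.summable {ν x : ℝ} (hν : 0 < ν) (hx : 0 < x) {f : ℕ → ℝ} (hf : PB f) :
    Summable (fun i => wt ν x i * f i) := by
  obtain ⟨C, n, h⟩ := hf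
  refine Summable.of_norm_bounded (((coef_summable hν (Real.rpow_pos_of_pos hx ν) n)).mul_left C)
    fun i => ?_
  rw [norm_mul, Real.norm_of_nonneg (wt_pos hx i).le]
  calc wt ν x i * ‖f i‖ ≤ wt ν x i * (C * ((i : ℝ) + 1) ^ n) :=
        mul_le_mul_of_nonneg_left (h i) (wt_pos hx i).le
    _ = _ := by unfold wt; ring

lemma PB.mono {f g : ℕ → ℝ} (hg : PB g) (h : ∀ i, |f i| ≤ |g i|) : PB f := by
  obtain ⟨C, n, hC⟩ := hg
  exact ⟨C, n, fun i => (h i).trans (hC i)⟩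

lemma PB.const (c : ℝ) : PB (fun _ => c) := ⟨|c|, 0, fun i => by simp⟩

lemma PB.mul {f g : ℕ → ℝ} (hf : PB f) (hg : PB g) : PB (fun i => f i * g i) := by
  obtain ⟨C, n, hC⟩ := hf
  obtain ⟨D, k, hD⟩ := hg
  refine ⟨C * D, n + k, fun i => ?_⟩
  rw [abs_mul, pow_add]
  calc |f i| * |g i| ≤ (C * ((i : ℝ) + 1) ^ n) * (D * ((i : ℝ) + 1) ^ k) :=
        mul_le_mul (hC i) (hD i) (abs_nonneg _) ((abs_nonneg _).trans (hC i))
    _ = _ := by ring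

lemma PB.add {f g : ℕ → ℝ} (hf : PB f) (hg : PB g) : PB (fun i => f i + g i) := by
  obtain ⟨C, n, hC⟩ := hf
  obtain ⟨D, k, hD⟩ := hg
  refine ⟨|C| + |D|, n + k, fun i => ?_⟩
  have h1 : (1 : ℝ) ≤ (i : ℝ) + 1 := by linarith [(Nat.cast_nonneg i : (0 : ℝ) ≤ i)]
  have a : |f i| ≤ |C| * ((i : ℝ) + 1) ^ (n + k) := (hC i).trans
    (mul_le_mul (le_abs_self C) (pow_le_pow_right₀ h1 (by omega)) (by positivity) (abs_nonneg _))
  have b : |g i| ≤ |D| * ((i : ℝ) + 1) ^ (n + k) := (hD i).trans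
    (mul_le_mul (le_abs_self D) (pow_le_pow_right₀ h1 (by omega)) (by positivity) (abs_nonneg _))
  calc |f i + g i| ≤ |f i| + |g i| := abs_add_le _ _
    _ ≤ _ := by rw [add_mul]; exact add_le_add a b

lemma PB.pow {f : ℕ → ℝ} (hf : PB f) (k : ℕ) : PB (fun i => f i ^ k) := by
  induction k with
  | zero => simpa using PB.const 1
  | succ k ih => simpa [pow_succ] using ih.mul hf

lemma PB.neg {f : ℕ → ℝ} (hf : PB f) : PB (fun i => -f i) := by
  simpa using (PB.const (-1)).mul hf

lemma PB.sub {f g : ℕ → ℝ} (hf : PB f) (hg : PB g) : PB (fun i => f i - g i) := by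
  simpa [sub_eq_add_neg] using hf.add hg.neg

lemma PB.abs {f : ℕ → ℝ} (hf : PB f) : PB (fun i => |f i|) := hf.mono fun i => by simp

lemma PB.cast : PB (fun i => (i : ℝ)) :=
  ⟨1, 1, fun i => by rw [abs_of_nonneg (Nat.cast_nonneg i)]; simp⟩

lemma PB.sum {ι : Type*} (s : Finset ι) {f : ι → ℕ → ℝ} (hf : ∀ a ∈ s, PB (f a)) :
    PB (fun i => ∑ a ∈ s, f a i) := by
  classical
  induction s using Finset.induction_on with
  | empty => simpa using PB.const 0
  | insert a s ha ih =>
    simp only [Finset.sum_insert ha]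
    exact (hf a (by simp)).add (ih fun b hb => hf b (by simp [hb]))

/-- The relative deviation. -/
noncomputable def dl (x : ℝ) (i : ℕ) : ℝ := (i : ℝ) / x - 1

lemma PB.dl (x : ℝ) : PB (dl x) := by
  have := (PB.cast.mul (PB.const x⁻¹)).sub (PB.const 1)
  exact this.mono fun i => by simp [_root_.dl, div_eq_mul_inv]

lemma PB.yrpow {ν x : ℝ} (hν : 0 < ν) (hx : 0 < x) : PB (fun i => ((i : ℝ) / x) ^ ν) := by
  refine ⟨(1 / x) ^ ν, ⌈ν⌉₊, fun i => ?_⟩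
  have hi : (0 : ℝ) ≤ i := Nat.cast_nonneg i
  rw [abs_of_nonneg (Real.rpow_nonneg (by positivity) _), div_eq_mul_one_div,
    Real.mul_rpow hi (by positivity), mul_comm]
  refine mul_le_mul_of_nonneg_left ?_ (Real.rpow_nonneg (by positivity) _)
  calc (i : ℝ) ^ ν ≤ ((i : ℝ) + 1) ^ ν := Real.rpow_le_rpow hi (by linarith) hν.le
    _ ≤ ((i : ℝ) + 1) ^ ((⌈ν⌉₊ : ℕ) : ℝ) :=
        Real.rpow_le_rpow_of_exponent_le (by linarith) (Nat.le_ceil ν)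
    _ = _ := Real.rpow_natCast _ _

section
variable {ν x : ℝ}

lemma SS_add {f g : ℕ → ℝ} (hν : 0 < ν) (hx : 0 < x) (hf : PB f) (hg : PB g) :
    SS ν x (fun i => f i + g i) = SS ν x f + SS ν x g := by
  unfold SS
  rw [← (hf.summable hν hx).tsum_add (hg.summable hν hx)]
  exact tsum_congr fun i => by ring

lemma SS_smul (c : ℝ) (f : ℕ → ℝ) : SS ν x (fun i => c * f i) = c * SS ν x f := by
  unfold SS
  rw [← tsum_mul_left]
  exact tsum_congr fun i => by ring

lemma SS_sub {f g : ℕ → ℝ} (hν : 0 < ν) (hx : 0 < x) (hf : PB f) (hg : PB g) :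
    SS ν x (fun i => f i - g i) = SS ν x f - SS ν x g := by
  unfold SS
  rw [← (hf.summable hν hx).tsum_sub (hg.summable hν hx)]
  exact tsum_congr fun i => by ring

lemma SS_mono {f g : ℕ → ℝ} (hν : 0 < ν) (hx : 0 < x) (hf : PB f) (hg : PB g)
    (h : ∀ i, f i ≤ g i) : SS ν x f ≤ SS ν x g :=
  (hf.summable hν hx).tsum_le_tsum (fun i => mul_le_mul_of_nonneg_left (h i) (wt_pos hx i).le)
    (hg.summable hν hx)

lemma SS_nonneg {f : ℕ → ℝ} (hx : 0 < x) (h : ∀ i, 0 ≤ f i) : 0 ≤ SS ν x f :=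
  tsum_nonneg fun i => mul_nonneg (wt_pos hx i).le (h i)

lemma SS_abs {f : ℕ → ℝ} (hν : 0 < ν) (hx : 0 < x) (hf : PB f) :
    |SS ν x f| ≤ SS ν x (fun i => |f i|) := by
  rw [abs_le]
  constructor
  · have := SS_mono hν hx (hf.abs.neg) hf (fun i => neg_abs_le (f i))
    have e := SS_smul (ν := ν) (x := x) (-1) (fun i => |f i|)
    simp only [neg_mul, one_mul] at e
    linarith
  · exact SS_mono hν hx hf hf.abs (fun i => le_abs_self _)

lemma SS_sum {ι : Type*} (hν : 0 < ν) (hx : 0 < x) (s : Finset ι) {f : ι → ℕ → ℝ}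
    (hf : ∀ a ∈ s, PB (f a)) :
    SS ν x (fun i => ∑ a ∈ s, f a i) = ∑ a ∈ s, SS ν x (f a) := by
  unfold SS
  rw [← Summable.tsum_finsetSum (fun a ha => (hf a ha).summable hν hx)]
  exact tsum_congr fun i => by rw [Finset.mul_sum]

lemma SS_one_pos (hν : 0 < ν) (hx : 0 < x) : 0 < SS ν x (fun _ => 1) := by
  have h := (PB.const 1).summable hν hx
  exact h.tsum_pos (fun i => by simpa using (wt_pos hx i).le) 0 (by simpa using wt_pos hx 0)

lemma SS_one_eq : SS ν x (fun _ => 1) = cmpZ (x ^ ν) ν := by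
  unfold SS cmpZ wt; simp

lemma stein (hν : 0 < ν) (hx : 0 < x) (φ : ℝ → ℝ)
    (hφ : PB (fun i => ((i : ℝ) / x) ^ ν * φ (dl x i))) :
    SS ν x (fun i => ((i : ℝ) / x) ^ ν * φ (dl x i)) = SS ν x (fun i => φ (dl x i + 1 / x)) := by
  have h := hφ.summable hν hx
  unfold SS
  rw [h.tsum_eq_zero_add]
  simp only [Nat.cast_zero, zero_div, Real.zero_rpow hν.ne', zero_mul, mul_zero, zero_add]
  refine tsum_congr fun i => ?_
  have e1 : dl x (i + 1) = dl x i + 1 / x := by unfold dl; push_cast; ring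
  rw [e1, ← mul_assoc]
  congr 1
  unfold wt
  have hi : (0 : ℝ) < (i : ℝ) + 1 := by positivity
  have hp := Real.rpow_pos_of_pos hi ν
  have hxp := Real.rpow_pos_of_pos hx ν
  have hf := fact_rpow_pos ν i
  rw [Nat.factorial_succ]; push_cast
  rw [Real.mul_rpow hi.le (by positivity), Real.div_rpow hi.le hx.le, pow_succ]
  field_simp

end

lemma rpow_sub_one_mul_ge {ν y : ℝ} (hν : 0 < ν) (hy : 0 ≤ y) :
    min 1 ν * ((y - 1) ^ 2 / (1 + |y - 1|)) ≤ (y ^ ν - 1) * (y - 1) := by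
  have hc : 0 < min 1 ν := lt_min one_pos hν
  rcases le_total 1 y with h | h
  · have hy0 : 0 < y := by linarith
    rw [abs_of_nonneg (by linarith : 0 ≤ y - 1)]
    have e : (y - 1) ^ 2 / (1 + (y - 1)) = (1 - y⁻¹) * (y - 1) := by
      rw [show 1 + (y - 1) = y by ring]; field_simp
    rw [e, ← mul_assoc]
    refine mul_le_mul_of_nonneg_right ?_ (by linarith)
    have h1 : ν * Real.log y + 1 ≤ y ^ ν := by
      rw [Real.rpow_def_of_pos hy0, mul_comm (Real.log y)]; exact Real.add_one_le_exp _
    have h2 : 1 - y⁻¹ ≤ Real.log y := Real.one_sub_inv_le_log_of_pos hy0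
    have h3 : 0 ≤ 1 - y⁻¹ := by
      have := inv_le_one_of_one_le₀ h; linarith
    have h4 : min 1 ν * (1 - y⁻¹) ≤ ν * (1 - y⁻¹) :=
      mul_le_mul_of_nonneg_right (min_le_right _ _) h3
    have h5 : ν * (1 - y⁻¹) ≤ ν * Real.log y := mul_le_mul_of_nonneg_left h2 hν.le
    linarith
  · have h1 : y ^ ν ≤ 1 + min 1 ν * (y - 1) := by
      rcases le_total 1 ν with hn | hn
      · rw [min_eq_left hn]
        have : y ^ ν ≤ y ^ (1 : ℝ) := Real.rpow_le_rpow_of_exponent_ge_of_imp hy h hn (by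
          intro _ hh; linarith)
        rw [Real.rpow_one] at this; linarith
      · rw [min_eq_right hn]
        have := rpow_one_add_le_one_add_mul_self (s := y - 1) (p := ν) (by linarith) hν.le hn
        simpa using this
    have h2 : (y - 1) ^ 2 / (1 + |y - 1|) ≤ (y - 1) ^ 2 :=
      div_le_self (sq_nonneg _) (by linarith [abs_nonneg (y - 1)])
    have h3 : min 1 ν * ((y - 1) ^ 2 / (1 + |y - 1|)) ≤ min 1 ν * (y - 1) ^ 2 :=
      mul_le_mul_of_nonneg_left h2 hc.le
    nlinarith

lemma pow_shift_le (n : ℕ) (d e : ℝ) (he : 0 ≤ e) :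
    (d + e) ^ (2 * n + 1) - d ^ (2 * n + 1) ≤
      e * ((2 * n + 1) * 4 ^ n) * (d ^ (2 * n) + e ^ (2 * n)) := by
  have h1 : |(d + e) ^ (2 * n + 1) - d ^ (2 * n + 1)| ≤
      |(d + e) - d| * ((2 * n + 1 : ℕ) : ℝ) * max |d + e| |d| ^ (2 * n) := by
    simpa using abs_pow_sub_pow_le (d + e) d (2 * n + 1)
  have h2 : max |d + e| |d| ≤ |d| + e := by
    refine max_le ?_ (by linarith)
    calc |d + e| ≤ |d| + |e| := abs_add_le _ _
      _ = _ := by rw [abs_of_nonneg he]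
  have h3 : max |d + e| |d| ^ (2 * n) ≤ (|d| + e) ^ (2 * n) :=
    pow_le_pow_left₀ (le_max_of_le_right (abs_nonneg _)) h2 _
  have h4 : (|d| + e) ^ (2 * n) ≤ 4 ^ n * (d ^ (2 * n) + e ^ (2 * n)) := by
    have a : (|d| + e) ^ (2 * n) ≤ (2 * max |d| e) ^ (2 * n) :=
      pow_le_pow_left₀ (by positivity) (by
        linarith [le_max_left |d| e, le_max_right |d| e]) _
    have b : (max |d| e) ^ (2 * n) ≤ d ^ (2 * n) + e ^ (2 * n) := by
      rcases max_choice |d| e with h | h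
      · rw [h, pow_mul, sq_abs, ← pow_mul]; linarith [pow_nonneg he (2 * n)]
      · rw [h]; have : 0 ≤ d ^ (2 * n) := by rw [pow_mul]; positivity
        linarith
    rw [mul_pow, pow_mul 2 2 n] at a
    norm_num at a
    exact a.trans (mul_le_mul_of_nonneg_left b (by positivity))
  calc _ ≤ _ := le_abs_self _
    _ ≤ _ := h1
    _ ≤ e * ((2 * n + 1 : ℕ) : ℝ) * (4 ^ n * (d ^ (2 * n) + e ^ (2 * n))) := by
        rw [add_sub_cancel_left, abs_of_nonneg he]
        exact mul_le_mul_of_nonneg_left (h3.trans h4) (by positivity)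
    _ = _ := by push_cast; ring

/-- Damped even moments. -/
noncomputable def AA (ν x : ℝ) (m : ℕ) : ℝ := SS ν x (fun i => dl x i ^ (2 * m) / (1 + |dl x i|))

lemma PB.damp (x : ℝ) (m : ℕ) : PB (fun i => _root_.dl x i ^ (2 * m) / (1 + |_root_.dl x i|)) := by
  refine ((PB.dl x).pow (2 * m)).mono fun i => ?_
  rw [abs_div, abs_of_pos (by positivity : 0 < 1 + |_root_.dl x i|)]
  exact div_le_self (abs_nonneg _) (by linarith [abs_nonneg (_root_.dl x i)])

lemma damp_le (d : ℝ) (m : ℕ) :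
    d ^ (2 * m) ≤ 2 * (d ^ (2 * m) / (1 + |d|) + d ^ (2 * (m + 1)) / (1 + |d|)) := by
  have hp : 0 < 1 + |d| := by positivity
  have h0 : 0 ≤ d ^ (2 * m) := by rw [pow_mul]; positivity
  rw [← add_div, ← mul_div_assoc, le_div_iff₀ hp, mul_add 2 m 1, pow_add]
  have : 1 + |d| ≤ 2 * (1 + d ^ (2 * 1)) := by
    rw [show 2 * 1 = 2 by rfl, ← sq_abs d]; nlinarith [sq_nonneg (|d| - 1), abs_nonneg d]
  nlinarith [mul_le_mul_of_nonneg_left this h0]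

lemma even_moment_le {ν x : ℝ} (hν : 0 < ν) (hx : 0 < x) (m : ℕ) :
    SS ν x (fun i => dl x i ^ (2 * m)) ≤ 2 * (AA ν x m + AA ν x (m + 1)) := by
  have h := SS_mono hν hx ((PB.dl x).pow (2 * m))
    ((PB.const 2).mul ((PB.damp x m).add (PB.damp x (m + 1)))) (fun i => damp_le (dl x i) m)
  rwa [SS_smul, SS_add hν hx (PB.damp x m) (PB.damp x (m + 1))] at h

lemma AA_step {ν x : ℝ} (hν : 0 < ν) (hx : 0 < x) (m : ℕ) :
    min 1 ν * AA ν x (m + 1) ≤ (1 / x) * ((2 * m + 1) * 4 ^ m) *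
      (2 * (AA ν x m + AA ν x (m + 1)) + (1 / x) ^ (2 * m) * SS ν x (fun _ => 1)) := by
  have hd := PB.dl x
  have hy := PB.yrpow hν hx
  have hst := stein hν hx (fun d => d ^ (2 * m + 1)) (hy.mul (hd.pow _))
  have hsh : PB (fun i => (dl x i + 1 / x) ^ (2 * m + 1)) := (hd.add (PB.const (1 / x))).pow _
  have e1 : SS ν x (fun i => ((i : ℝ) / x) ^ ν * dl x i ^ (2 * m + 1) - dl x i ^ (2 * m + 1)) =
      SS ν x (fun i => (dl x i + 1 / x) ^ (2 * m + 1) - dl x i ^ (2 * m + 1)) := by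
    rw [SS_sub hν hx (hy.mul (hd.pow _)) (hd.pow _), hst, SS_sub hν hx hsh (hd.pow _)]
  have lo : min 1 ν * AA ν x (m + 1) ≤
      SS ν x (fun i => ((i : ℝ) / x) ^ ν * dl x i ^ (2 * m + 1) - dl x i ^ (2 * m + 1)) := by
    unfold AA
    rw [← SS_smul]
    refine SS_mono hν hx ((PB.const _).mul (PB.damp x (m + 1))) ((hy.mul (hd.pow _)).sub (hd.pow _))
      fun i => ?_
    have h := rpow_sub_one_mul_ge (y := (i : ℝ) / x) hν (by positivity)
    have h0 : 0 ≤ dl x i ^ (2 * m) := by rw [pow_mul]; positivity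
    have h' := mul_le_mul_of_nonneg_left h h0
    change dl x i ^ (2 * m) * (min 1 ν * (dl x i ^ 2 / (1 + |dl x i|))) ≤
      dl x i ^ (2 * m) * ((((i : ℝ) / x) ^ ν - 1) * dl x i) at h'
    calc _ = _ := by rw [mul_add 2 m 1, pow_add]; ring
      _ ≤ _ := h'
      _ = _ := by ring
  have hi : SS ν x (fun i => (dl x i + 1 / x) ^ (2 * m + 1) - dl x i ^ (2 * m + 1)) ≤
      (1 / x) * ((2 * m + 1) * 4 ^ m) * (SS ν x (fun i => dl x i ^ (2 * m)) +
        (1 / x) ^ (2 * m) * SS ν x (fun _ => 1)) := by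
    have h := SS_mono hν hx (hsh.sub (hd.pow _))
      ((PB.const ((1 / x) * ((2 * m + 1) * 4 ^ m))).mul
        ((hd.pow (2 * m)).add (PB.const ((1 / x) ^ (2 * m)))))
      (fun i => pow_shift_le m (dl x i) (1 / x) (by positivity))
    rw [SS_smul, SS_add hν hx (hd.pow (2 * m)) (PB.const ((1 / x) ^ (2 * m)))] at h
    have e : SS ν x (fun _ => (1 / x) ^ (2 * m)) = (1 / x) ^ (2 * m) * SS ν x (fun _ => 1) := by
      rw [← SS_smul]; simp
    rwa [e] at h
  rw [e1] at lo
  refine lo.trans (hi.trans (mul_le_mul_of_nonneg_left ?_ (by positivity)))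
  have := even_moment_le hν hx m
  linarith

lemma AA_bound {ν : ℝ} (hν : 0 < ν) (m : ℕ) : ∃ C X : ℝ, 0 < C ∧ 1 ≤ X ∧ ∀ x ≥ X,
    AA ν x m ≤ C * (1 / x) ^ m * SS ν x (fun _ => 1) := by
  induction m with
  | zero =>
    refine ⟨1, 1, one_pos, le_rfl, fun x hx => ?_⟩
    have hx0 : 0 < x := by linarith
    simp only [pow_zero, mul_one, one_mul]
    refine SS_mono hν hx0 (PB.damp x 0) (PB.const 1) fun i => ?_
    simp only [mul_zero, pow_zero]
    exact div_le_self one_pos.le (by linarith [abs_nonneg (dl x i)])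
  | succ m ih =>
    obtain ⟨C, X, hC, hX, h⟩ := ih
    set c := min 1 ν with hc
    have hc0 : 0 < c := lt_min one_pos hν
    set K : ℝ := (2 * m + 1) * 4 ^ m with hK
    have hK0 : 0 < K := by positivity
    refine ⟨2 * K * (2 * C + 1) / c, max X (4 * K / c), by positivity, le_max_of_le_left hX,
      fun x hx => ?_⟩
    have hxX : X ≤ x := le_of_max_le_left hx
    have hxK : 4 * K / c ≤ x := le_of_max_le_right hx
    have hx0 : 0 < x := by linarith
    have st := AA_step hν hx0 m
    have hm := h x hxX
    have hZ := SS_one_pos hν hx0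
    set Z := SS ν x (fun _ => 1)
    set e := 1 / x with he
    have he0 : 0 < e := by positivity
    have he1 : e ≤ 1 := by rw [he, div_le_one hx0]; linarith
    have hA0 : 0 ≤ AA ν x (m + 1) := SS_nonneg hx0 fun i => by rw [pow_mul]; positivity
    have hKe : 4 * K * e ≤ c := by
      rw [div_le_iff₀ hc0] at hxK
      rw [he, mul_one_div, div_le_iff₀ hx0]; linarith
    have hpe : e ^ (2 * m) ≤ e ^ m := pow_le_pow_of_le_one he0.le he1 (by omega)
    have h1 : e * K * (2 * (AA ν x m + AA ν x (m + 1)) + e ^ (2 * m) * Z) ≤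
        e * K * (2 * (C * e ^ m * Z) + e ^ m * Z) + (2 * K * e) * AA ν x (m + 1) := by
      have : e ^ (2 * m) * Z ≤ e ^ m * Z := mul_le_mul_of_nonneg_right hpe hZ.le
      have h2 : 2 * (AA ν x m + AA ν x (m + 1)) + e ^ (2 * m) * Z ≤
        (2 * (C * e ^ m * Z) + e ^ m * Z) + 2 * AA ν x (m + 1) := by linarith
      calc _ ≤ e * K * ((2 * (C * e ^ m * Z) + e ^ m * Z) + 2 * AA ν x (m + 1)) :=
            mul_le_mul_of_nonneg_left h2 (by positivity)
        _ = _ := by ring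
    have h3 : (2 * K * e) * AA ν x (m + 1) ≤ c / 2 * AA ν x (m + 1) :=
      mul_le_mul_of_nonneg_right (by linarith) hA0
    have h4 : c / 2 * AA ν x (m + 1) ≤ e * K * (2 * (C * e ^ m * Z) + e ^ m * Z) := by linarith
    have e5 : 2 * K * (2 * C + 1) / c * e ^ (m + 1) * Z =
        (e * K * (2 * (C * e ^ m * Z) + e ^ m * Z)) * (2 / c) := by
      rw [pow_succ]; field_simp
    rw [e5]
    calc AA ν x (m + 1) = c / 2 * AA ν x (m + 1) * (2 / c) := by field_simp
      _ ≤ _ := mul_le_mul_of_nonneg_right h4 (by positivity)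

lemma even_moment_bound {ν : ℝ} (hν : 0 < ν) (m : ℕ) : ∃ C X : ℝ, 0 < C ∧ 1 ≤ X ∧ ∀ x ≥ X,
    SS ν x (fun i => dl x i ^ (2 * m)) ≤ C * (1 / x) ^ m * SS ν x (fun _ => 1) := by
  obtain ⟨C, X, hC, hX, h⟩ := AA_bound hν m
  obtain ⟨D, Y, hD, hY, h'⟩ := AA_bound hν (m + 1)
  refine ⟨2 * (C + D), max X Y, by positivity, le_max_of_le_left hX, fun x hx => ?_⟩
  have hxX : X ≤ x := le_of_max_le_left hx
  have hx0 : 0 < x := by linarith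
  have a := h x hxX
  have b := h' x (le_of_max_le_right hx)
  have hZ := SS_one_pos hν hx0
  have he1 : 1 / x ≤ 1 := by rw [div_le_one hx0]; linarith
  have hp : (1 / x) ^ (m + 1) ≤ (1 / x) ^ m :=
    pow_le_pow_of_le_one (by positivity) he1 (by omega)
  have b' : D * (1 / x) ^ (m + 1) * SS ν x (fun _ => 1) ≤ D * (1 / x) ^ m * SS ν x (fun _ => 1) :=
    mul_le_mul_of_nonneg_right (mul_le_mul_of_nonneg_left hp hD.le) hZ.le
  have := even_moment_le hν hx0 m
  linarith

lemma abs_moment_bound {ν : ℝ} (hν : 0 < ν) (n : ℕ) (hn : 8 ≤ n) : ∃ C X : ℝ, 0 < C ∧ 1 ≤ X ∧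
    ∀ x ≥ X, SS ν x (fun i => |dl x i| ^ n) ≤ C * (1 / x) ^ 4 * SS ν x (fun _ => 1) := by
  obtain ⟨C, X, hC, hX, h⟩ := even_moment_bound hν 4
  obtain ⟨D, Y, hD, hY, h'⟩ := even_moment_bound hν n
  refine ⟨C + D, max X Y, by positivity, le_max_of_le_left hX, fun x hx => ?_⟩
  have hxX : X ≤ x := le_of_max_le_left hx
  have hx0 : 0 < x := by linarith
  have a := h x hxX
  have b := h' x (le_of_max_le_right hx)
  have hZ := SS_one_pos hν hx0
  have he1 : 1 / x ≤ 1 := by rw [div_le_one hx0]; linarith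
  have hp : (1 / x) ^ n ≤ (1 / x) ^ 4 :=
    pow_le_pow_of_le_one (by positivity) he1 (by omega)
  have b' : D * (1 / x) ^ n * SS ν x (fun _ => 1) ≤ D * (1 / x) ^ 4 * SS ν x (fun _ => 1) :=
    mul_le_mul_of_nonneg_right (mul_le_mul_of_nonneg_left hp hD.le) hZ.le
  have hd := PB.dl x
  have := SS_mono hν hx0 (hd.abs.pow n) ((hd.pow (2 * 4)).add (hd.pow (2 * n))) (fun i => by
    have e1 : dl x i ^ (2 * 4) = |dl x i| ^ 8 := by rw [pow_mul, ← sq_abs, ← pow_mul]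
    have e2 : dl x i ^ (2 * n) = |dl x i| ^ (2 * n) := by
      rw [pow_mul, ← sq_abs, ← pow_mul]
    rw [e1, e2]
    rcases le_total |dl x i| 1 with h | h
    · have := pow_le_pow_of_le_one (abs_nonneg _) h hn
      linarith [pow_nonneg (abs_nonneg (dl x i)) (2 * n)]
    · have := pow_le_pow_right₀ h (by omega : n ≤ 2 * n)
      linarith [pow_nonneg (abs_nonneg (dl x i)) 8])
  rw [SS_add hν hx0 (hd.pow (2 * 4)) (hd.pow (2 * n))] at this
  linarith

lemma bc_eq_choose (ν : ℝ) (j : ℕ) (hj : j ≤ 7) : Ring.choose ν j = bc ν j := by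
  rw [Ring.choose_eq_smul, ← Polynomial.aeval_eq_smeval]
  interval_cases j <;>
    simp [bc, descPochhammer_succ_right, Nat.factorial, map_ofNat] <;> ring

lemma taylor_local (ν : ℝ) (n : ℕ) (hn : n ≤ 8) : ∃ C η : ℝ, 0 ≤ C ∧ 0 < η ∧ η ≤ 1 ∧
    ∀ d : ℝ, |d| < η → |(1 + d) ^ ν - ∑ j ∈ Finset.range n, bc ν j * d ^ j| ≤ C * |d| ^ n := by
  have h := (Real.one_add_rpow_hasFPowerSeriesAt_zero (a := ν)).isBigO_sub_partialSum_pow n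
  obtain ⟨C, hC0, hC⟩ := h.exists_nonneg
  rw [Asymptotics.IsBigOWith, Metric.eventually_nhds_iff] at hC
  obtain ⟨η, hη, hC⟩ := hC
  refine ⟨C, min η 1, hC0, lt_min hη one_pos, min_le_right _ _, fun d hd => ?_⟩
  have := hC (y := d) (by simpa using lt_of_lt_of_le hd (min_le_left _ _))
  simp only [zero_add, FormalMultilinearSeries.partialSum, norm_pow, Real.norm_eq_abs, abs_abs] at this
  refine le_trans (le_of_eq ?_) this
  congr 2
  refine Finset.sum_congr rfl fun j hj => ?_
  rw [binomialSeries_apply, bc_eq_choose ν j (by have := Finset.mem_range.1 hj; omega)]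
  simp

lemma taylor_global {ν : ℝ} (hν : 0 < ν) (n M : ℕ) (hn : n ≤ 8) (hM : n ≤ M) (hνM : ν ≤ M) :
    ∃ C : ℝ, 0 ≤ C ∧ ∀ d : ℝ, -1 ≤ d →
      |(1 + d) ^ ν - ∑ j ∈ Finset.range n, bc ν j * d ^ j| ≤ C * (|d| ^ n + |d| ^ M) := by
  obtain ⟨C, η, hC, hη, hη1, h⟩ := taylor_local ν n hn
  set B := (2 / η) ^ M + ∑ j ∈ Finset.range n, |bc ν j| * (1 / η) ^ M with hB
  have hB0 : 0 ≤ B := by positivity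
  refine ⟨C + B, by positivity, fun d hd => ?_⟩
  have hp1 : 0 ≤ |d| ^ n := by positivity
  have hp2 : 0 ≤ |d| ^ M := by positivity
  rcases lt_or_ge |d| η with hlt | hge
  · have := h d hlt
    nlinarith [mul_nonneg hC hp2, mul_nonneg hB0 hp1, mul_nonneg hB0 hp2]
  · have hq : 1 ≤ |d| / η := by rwa [le_div_iff₀ hη, one_mul]
    have h1 : |(1 + d) ^ ν| ≤ (2 / η) ^ M * |d| ^ M := by
      rw [abs_of_nonneg (Real.rpow_nonneg (by linarith) _)]
      calc (1 + d) ^ ν ≤ (1 + |d|) ^ ν :=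
            Real.rpow_le_rpow (by linarith) (by linarith [le_abs_self d]) hν.le
        _ ≤ (1 + |d|) ^ (M : ℝ) :=
            Real.rpow_le_rpow_of_exponent_le (by linarith [abs_nonneg d]) hνM
        _ = (1 + |d|) ^ M := Real.rpow_natCast _ _
        _ ≤ (2 / η * |d|) ^ M := by
            refine pow_le_pow_left₀ (by positivity) ?_ _
            have : |d| ≤ |d| / η := le_div_self (abs_nonneg _) hη hη1
            calc 1 + |d| ≤ |d| / η + |d| / η := add_le_add hq this
              _ = _ := by ring
        _ = _ := mul_pow _ _ _
    have h2 : |∑ j ∈ Finset.range n, bc ν j * d ^ j| ≤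
        (∑ j ∈ Finset.range n, |bc ν j| * (1 / η) ^ M) * |d| ^ M := by
      rw [Finset.sum_mul]
      refine (Finset.abs_sum_le_sum_abs _ _).trans (Finset.sum_le_sum fun j hj => ?_)
      have hj' := Finset.mem_range.1 hj
      rw [abs_mul, abs_pow, mul_assoc, ← mul_pow]
      refine mul_le_mul_of_nonneg_left ?_ (abs_nonneg _)
      calc |d| ^ j ≤ (|d| / η) ^ j :=
            pow_le_pow_left₀ (abs_nonneg _) (le_div_self (abs_nonneg _) hη hη1) _
        _ ≤ (|d| / η) ^ M := pow_le_pow_right₀ hq (by omega)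
        _ = _ := by congr 1; ring
    have h3 := (abs_sub _ _).trans (add_le_add h1 h2)
    rw [← add_mul, ← hB] at h3
    nlinarith [mul_nonneg hC hp1, mul_nonneg hC hp2, mul_nonneg hB0 hp1]

/-- Normalized moments. -/
noncomputable def mom (ν x : ℝ) (l : ℕ) : ℝ := SS ν x (fun i => dl x i ^ l) / SS ν x (fun _ => 1)

/-- Residual of the moment equations. -/
noncomputable def res (ν x : ℝ) (k : ℕ) : ℝ :=
  SS ν x (fun i => dl x i ^ k * (∑ j ∈ Finset.range (8 - k), bc ν j * dl x i ^ j -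
    (1 + dl x i) ^ ν)) / SS ν x (fun _ => 1)

lemma PB.one_add_dl {ν x : ℝ} (hν : 0 < ν) (hx : 0 < x) :
    PB (fun i => (1 + _root_.dl x i) ^ ν) := by
  refine (PB.yrpow hν hx).mono fun i => ?_
  simp [_root_.dl]

lemma res_eq {ν x : ℝ} (hν : 0 < ν) (hx : 0 < x) (k : ℕ) (hk : k ≤ 6) :
    res ν x k = ∑ j ∈ Finset.range (7 - k), bc ν (j + 1) * mom ν x (k + (j + 1)) -
      ∑ l ∈ Finset.range k, (k.choose l : ℝ) * (1 / x) ^ (k - l) * mom ν x l := by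
  have hZ := (SS_one_pos hν hx).ne'
  have hd := PB.dl x
  have hy := PB.yrpow hν hx
  have hst := stein hν hx (fun d => d ^ k) (hy.mul (hd.pow _))
  have e0 : SS ν x (fun i => dl x i ^ k * (∑ j ∈ Finset.range (8 - k), bc ν j * dl x i ^ j -
      (1 + dl x i) ^ ν)) = SS ν x (fun i => ∑ j ∈ Finset.range (8 - k), bc ν j * dl x i ^ (k + j)) -
      SS ν x (fun i => ((i : ℝ) / x) ^ ν * dl x i ^ k) := by
    rw [← SS_sub hν hx (PB.sum _ fun j _ => (PB.const _).mul (hd.pow _)) (hy.mul (hd.pow _))]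
    congr 1; funext i
    rw [mul_sub, Finset.mul_sum]
    congr 1
    · exact Finset.sum_congr rfl fun j _ => by rw [pow_add]; ring
    · rw [show (1 : ℝ) + dl x i = (i : ℝ) / x by unfold dl; ring]; ring
  have e1 : SS ν x (fun i => (dl x i + 1 / x) ^ k) =
      ∑ l ∈ Finset.range (k + 1), (k.choose l : ℝ) * (1 / x) ^ (k - l) *
        SS ν x (fun i => dl x i ^ l) := by
    have : (fun i => (dl x i + 1 / x) ^ k) = fun i => ∑ l ∈ Finset.range (k + 1),
        ((k.choose l : ℝ) * (1 / x) ^ (k - l)) * dl x i ^ l := by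
      funext i; rw [add_pow]; exact Finset.sum_congr rfl fun l _ => by ring
    rw [this, SS_sum hν hx _ fun l _ => (PB.const _).mul (hd.pow _)]
    exact Finset.sum_congr rfl fun l _ => SS_smul _ _
  unfold res
  rw [e0, hst, e1, SS_sum hν hx _ fun l _ => (PB.const _).mul (hd.pow _),
    show 8 - k = (7 - k) + 1 by omega, Finset.sum_range_succ', Finset.sum_range_succ]
  simp only [SS_smul, mom, Nat.choose_self, Nat.sub_self, pow_zero, Nat.cast_one, one_mul,
    add_zero, bc]
  rw [add_sub_add_right_eq_sub, sub_div, Finset.sum_div, Finset.sum_div]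
  simp only [mul_div_assoc]

lemma res_bound {ν : ℝ} (hν : 0 < ν) (k : ℕ) (hk : k ≤ 6) : ∃ C X : ℝ, 0 < C ∧ 1 ≤ X ∧
    ∀ x ≥ X, |res ν x k| ≤ C * (1 / x) ^ 4 := by
  set M := 8 + ⌈ν⌉₊ with hM
  obtain ⟨T, hT0, hT⟩ := taylor_global hν (8 - k) M (by omega) (by omega)
    (by rw [hM]; push_cast; linarith [Nat.le_ceil ν])
  obtain ⟨C, X, hC, hX, h⟩ := abs_moment_bound hν 8 le_rfl
  obtain ⟨D, Y, hD, hY, h'⟩ := abs_moment_bound hν (k + M) (by omega)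
  refine ⟨(T + 1) * (C + D), max X Y, by positivity, le_max_of_le_left hX, fun x hx => ?_⟩
  have hxX : X ≤ x := le_of_max_le_left hx
  have hx0 : 0 < x := by linarith
  have a := h x hxX
  have b := h' x (le_of_max_le_right hx)
  have hZ := SS_one_pos hν hx0
  have hd := PB.dl x
  have hf : PB (fun i => dl x i ^ k * (∑ j ∈ Finset.range (8 - k), bc ν j * dl x i ^ j -
    (1 + dl x i) ^ ν)) := (hd.pow k).mul ((PB.sum _ fun j _ => (PB.const _).mul (hd.pow _)).sub
      (PB.one_add_dl hν hx0))
  have h1 := SS_abs hν hx0 hf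
  have h2 := SS_mono hν hx0 hf.abs ((PB.const T).mul ((hd.abs.pow 8).add (hd.abs.pow (k + M))))
    (fun i => by
      have hdi : -1 ≤ dl x i := by
        have : 0 ≤ (i : ℝ) / x := by positivity
        unfold dl; linarith
      have := hT (dl x i) hdi
      rw [abs_mul, abs_sub_comm, abs_pow]
      calc _ ≤ |dl x i| ^ k * (T * (|dl x i| ^ (8 - k) + |dl x i| ^ M)) :=
            mul_le_mul_of_nonneg_left this (by positivity)
        _ = T * (|dl x i| ^ (k + (8 - k)) + |dl x i| ^ (k + M)) := by
            rw [pow_add, pow_add]; ring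
        _ = _ := by rw [show k + (8 - k) = 8 by omega])
  rw [SS_smul, SS_add hν hx0 (hd.abs.pow 8) (hd.abs.pow (k + M))] at h2
  unfold res
  rw [abs_div, abs_of_pos hZ, div_le_iff₀ hZ]
  have hE : 0 ≤ (1 / x) ^ 4 * SS ν x (fun _ => 1) := by positivity
  have h3 : T * (SS ν x (fun i => |dl x i| ^ 8) + SS ν x (fun i => |dl x i| ^ (k + M))) ≤
      T * ((C + D) * ((1 / x) ^ 4 * SS ν x (fun _ => 1))) :=
    mul_le_mul_of_nonneg_left (by linarith) hT0
  have h4 : 0 ≤ (C + D) * ((1 / x) ^ 4 * SS ν x (fun _ => 1)) := by positivity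
  linarith

lemma mom_bound {ν : ℝ} (hν : 0 < ν) : ∃ C X : ℝ, 0 < C ∧ 1 ≤ X ∧
    ∀ x ≥ X, ∀ l ≤ 7, |mom ν x l| ≤ C := by
  obtain ⟨C, X, hC, hX, h⟩ := abs_moment_bound hν 8 le_rfl
  refine ⟨C + 1, X, by positivity, hX, fun x hx l hl => ?_⟩
  have hx0 : 0 < x := by linarith
  have a := h x hx
  have hZ := SS_one_pos hν hx0
  have hd := PB.dl x
  have h1 := SS_abs hν hx0 (hd.pow l)
  have h2 := SS_mono hν hx0 (hd.pow l).abs ((PB.const 1).add (hd.abs.pow 8)) (fun i => by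
    rw [abs_pow]
    rcases le_total |dl x i| 1 with h | h
    · have := pow_le_one₀ (n := l) (abs_nonneg _) h
      linarith [pow_nonneg (abs_nonneg (dl x i)) 8]
    · have := pow_le_pow_right₀ h (by omega : l ≤ 8)
      linarith)
  rw [SS_add hν hx0 (PB.const 1) (hd.abs.pow 8)] at h2
  unfold mom
  rw [abs_div, abs_of_pos hZ, div_le_iff₀ hZ]
  have he : (1 / x) ^ 4 ≤ 1 := pow_le_one₀ (by positivity) (by rw [div_le_one hx0]; linarith)
  have : C * (1 / x) ^ 4 * SS ν x (fun _ => 1) ≤ C * 1 * SS ν x (fun _ => 1) :=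
    mul_le_mul_of_nonneg_right (mul_le_mul_of_nonneg_left he hC.le) hZ.le
  linarith

lemma first_moment {ν : ℝ} (hν : 0 < ν) : ∃ C X : ℝ, 0 < C ∧ 1 ≤ X ∧ ∀ x ≥ X,
    |mom ν x 1 - (-(ν - 1) / (2 * ν) * (1 / x) - (ν ^ 2 - 1) / (24 * ν ^ 2) * (1 / x) ^ 2 -
      (ν ^ 2 - 1) / (24 * ν ^ 3) * (1 / x) ^ 3)| ≤ C * (1 / x) ^ 4 := by
  obtain ⟨K0, X0, hK0, hX0, h0⟩ := mom_bound hν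
  have hr : ∀ k : ℕ, ∃ C X : ℝ, 0 < C ∧ 1 ≤ X ∧ (k ≤ 6 → ∀ x ≥ X,
      |res ν x k| ≤ C * (1 / x) ^ 4) := fun k => by
    by_cases hk : k ≤ 6
    · obtain ⟨C, X, a, b, c⟩ := res_bound hν k hk
      exact ⟨C, X, a, b, fun _ => c⟩
    · exact ⟨1, 1, one_pos, le_rfl, fun h => absurd h hk⟩
  choose Cr Xr hC hX hb using hr
  set K := K0 + ∑ k ∈ Finset.range 7, Cr k with hK
  set X := X0 + ∑ k ∈ Finset.range 7, Xr k with hXd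
  obtain ⟨C, hE⟩ := elim_bound ν hν.ne' K
  have sC : 0 ≤ ∑ k ∈ Finset.range 7, Cr k := Finset.sum_nonneg fun k _ => (hC k).le
  have sX : 0 ≤ ∑ k ∈ Finset.range 7, Xr k := Finset.sum_nonneg fun k _ => by linarith [hX k]
  refine ⟨|C| + 1, X, by positivity, by linarith, fun x hx => ?_⟩
  have hx1 : 1 ≤ x := by linarith
  have hx0 : 0 < x := by linarith
  have he1 : 1 / x ≤ 1 := by rw [div_le_one hx0]; linarith
  have hZ := SS_one_pos hν hx0
  have := hE (1 / x) (mom ν x) (res ν x) (by positivity) he1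
    (fun l hl => (h0 x (by linarith) l hl).trans (by linarith))
    (fun k hk => by
      have c1 : Cr k ≤ ∑ k ∈ Finset.range 7, Cr k :=
        Finset.single_le_sum (fun k _ => (hC k).le) (Finset.mem_range.2 (by omega))
      have c2 : Xr k ≤ ∑ k ∈ Finset.range 7, Xr k :=
        Finset.single_le_sum (f := Xr) (fun k _ => by linarith [hX k])
          (Finset.mem_range.2 (by omega))
      exact (hb k hk x (by linarith)).trans (mul_le_mul_of_nonneg_right (by linarith)
        (by positivity)))
    (by simp [mom, hZ.ne']) (fun k hk => res_eq hν hx0 k hk)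
  exact this.trans (mul_le_mul_of_nonneg_right (by linarith [le_abs_self C]) (by positivity))

lemma cmpZ_hasDerivAt {ν : ℝ} (hν : 0 < ν) {q : ℝ} (hq : 0 < q) :
    HasDerivAt (fun q => cmpZ q ν)
      (∑' i : ℕ, (i : ℝ) * q ^ (i - 1) / (i.factorial : ℝ) ^ ν) q := by
  have hR : 0 < q + 1 := by linarith
  have hu := coef_summable hν hR 1
  have hs := coef_summable hν hq 0
  unfold cmpZ
  refine hasDerivAt_tsum_of_isPreconnected (t := Set.Ioo 0 (q + 1)) (y₀ := q)
    (g := fun (i : ℕ) (y : ℝ) => y ^ i / (i.factorial : ℝ) ^ ν)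
    (g' := fun (i : ℕ) (y : ℝ) => (i : ℝ) * y ^ (i - 1) / (i.factorial : ℝ) ^ ν) hu isOpen_Ioo isPreconnected_Ioo
    (fun i y _ => (hasDerivAt_pow i y).div_const _) (fun i y hy => ?_) ⟨hq, by linarith⟩
    (by simpa using hs) ⟨hq, by linarith⟩
  have hf := fact_rpow_pos ν i
  have hy0 : 0 < y := hy.1
  rw [Real.norm_of_nonneg (by positivity), div_mul_eq_mul_div]
  refine div_le_div_of_nonneg_right ?_ hf.le
  have h1 : y ^ (i - 1) ≤ (q + 1) ^ (i - 1) := pow_le_pow_left₀ hy0.le hy.2.le _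
  have h2 : (q + 1) ^ (i - 1) ≤ (q + 1) ^ i := pow_le_pow_right₀ (by linarith) (by omega)
  rw [pow_one, mul_comm ((q + 1) ^ i)]
  exact mul_le_mul (by linarith) (h1.trans h2) (by positivity) (by positivity)

lemma log_cmpZ_hasDerivAt {ν : ℝ} (hν : 0 < ν) {x : ℝ} (hx : 0 < x) :
    HasDerivAt (fun x => Real.log (cmpZ (x ^ ν) ν)) (ν * (1 + mom ν x 1)) x := by
  have hq := Real.rpow_pos_of_pos hx ν
  have h1 := cmpZ_hasDerivAt hν hq
  have h2 := Real.hasDerivAt_rpow_const (x := x) (p := ν) (Or.inl hx.ne')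
  have hZ := SS_one_pos hν hx
  have hZ' : cmpZ (x ^ ν) ν ≠ 0 := by rw [← SS_one_eq]; exact hZ.ne'
  have hc : HasDerivAt (fun x => cmpZ (x ^ ν) ν)
      ((∑' i : ℕ, (i : ℝ) * (x ^ ν) ^ (i - 1) / (i.factorial : ℝ) ^ ν) * (ν * x ^ (ν - 1))) x :=
    HasDerivAt.comp (h₂ := fun q => cmpZ q ν) (h := fun x : ℝ => x ^ ν) x h1 h2
  have h3 := hc.log hZ'
  refine h3.congr_deriv ?_
  set D := ∑' i : ℕ, (i : ℝ) * (x ^ ν) ^ (i - 1) / (i.factorial : ℝ) ^ ν with hD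
  have e1 : x ^ ν * D = SS ν x (fun i => (i : ℝ)) := by
    rw [hD, ← tsum_mul_left]
    unfold SS wt
    refine tsum_congr fun i => ?_
    rcases i with _ | i
    · simp
    · rw [Nat.add_sub_cancel, pow_succ]; ring
  have e2 : SS ν x (fun i => (i : ℝ)) = x * (SS ν x (fun _ => 1) + SS ν x (fun i => dl x i ^ 1)) := by
    rw [← SS_add hν hx (PB.const 1) ((PB.dl x).pow 1), ← SS_smul]
    congr 1; funext i
    unfold dl; field_simp; ring
  have e3 : x ^ (ν - 1) = x ^ ν / x := by rw [Real.rpow_sub hx, Real.rpow_one]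
  rw [← SS_one_eq, e3]
  unfold mom
  calc D * (ν * (x ^ ν / x)) / SS ν x (fun _ => 1) = ν / x * (x ^ ν * D) / SS ν x (fun _ => 1) := by
        ring
    _ = _ := by rw [e1, e2]; field_simp

open MeasureTheory Filter Topology in
lemma integral_floor (f : ℕ → ℝ) (s : ℝ) (hs : 0 < s)
    (hf : IntegrableOn (fun u : ℝ => f ⌊u * s⌋₊) (Set.Ioi 0)) :
    ∫ u in Set.Ioi (0 : ℝ), f ⌊u * s⌋₊ = s⁻¹ * ∑' k, f k := by
  have hU : Set.Ici (0 : ℝ) = ⋃ k : ℕ, Set.Ico ((k : ℝ) / s) (((k : ℝ) + 1) / s) := by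
    ext u
    simp only [Set.mem_Ici, Set.mem_iUnion, Set.mem_Ico]
    constructor
    · intro hu
      refine ⟨⌊u * s⌋₊, ?_, ?_⟩
      · rw [div_le_iff₀ hs]; exact Nat.floor_le (by positivity)
      · rw [lt_div_iff₀ hs]; exact Nat.lt_floor_add_one _
    · rintro ⟨k, h, _⟩
      exact le_trans (by positivity) h
  have hfl : ∀ k : ℕ, ∀ u ∈ Set.Ico ((k : ℝ) / s) (((k : ℝ) + 1) / s), ⌊u * s⌋₊ = k := by
    intro k u hu
    have h1 := (div_le_iff₀ hs).1 hu.1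
    have h2 := (lt_div_iff₀ hs).1 hu.2
    rw [Nat.floor_eq_iff (le_trans (by positivity) h1)]
    exact ⟨h1, h2⟩
  have hf' : IntegrableOn (fun u : ℝ => f ⌊u * s⌋₊) (Set.Ici 0) :=
    (integrableOn_Ici_iff_integrableOn_Ioi (by simp)).2 hf
  rw [← integral_Ici_eq_integral_Ioi, hU, integral_iUnion (fun k => measurableSet_Ico) ?_ (hU ▸ hf'),
    ← tsum_mul_left]
  · refine tsum_congr fun k => ?_
    rw [setIntegral_congr_fun (g := fun _ => f k) measurableSet_Ico
      (fun u hu => by simp only [hfl k u hu])]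
    have : ((k : ℝ) + 1) / s - (k : ℝ) / s = s⁻¹ := by field_simp; ring
    simp [this, hs.le]
  · intro i j hij
    refine Set.disjoint_left.2 fun u hi hj => hij ?_
    rw [← hfl i u hi, hfl j u hj]

lemma prod_decay (a : ℕ → ℝ) (s : ℝ) (hs : 0 < s) (h0 : ∀ j, 0 ≤ a j) (h1 : ∀ j, a j ≤ 1)
    (h2 : ∀ j : ℕ, s ≤ j → a j ≤ Real.exp (-(1 / (2 * s)))) (k : ℕ) :
    ∏ j ∈ Finset.range (k + 1), a j ≤ Real.exp (1 / 2 - k / (2 * s)) := by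
  have triv : ∀ k : ℕ, (k : ℝ) ≤ s →
      ∏ j ∈ Finset.range (k + 1), a j ≤ Real.exp (1 / 2 - k / (2 * s)) := by
    intro k hk
    refine (Finset.prod_le_one (fun j _ => h0 j) (fun j _ => h1 j)).trans ?_
    refine Real.one_le_exp ?_
    have : (k : ℝ) / (2 * s) ≤ 1 / 2 := by rw [div_le_div_iff₀ (by positivity) (by norm_num)]; linarith
    linarith
  induction k with
  | zero => exact triv 0 (by simpa using hs.le)
  | succ k ih =>
    rcases le_total (((k + 1 : ℕ)) : ℝ) s with h | h
    · exact triv _ h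
    · rw [Finset.prod_range_succ]
      refine (mul_le_mul ih (h2 _ h) (h0 _) (Real.exp_pos _).le).trans ?_
      rw [← Real.exp_add]
      refine Real.exp_le_exp.2 (le_of_eq ?_)
      push_cast; field_simp; ring

lemma prod_sandwich (a : ℕ → ℝ) (N : ℕ) (hN : 0 < N)
    (h : ∀ j : ℕ, 2 * j ≤ N → Real.exp (-(j / N : ℝ) - (j / N : ℝ) ^ 2) ≤ a j ∧
      a j ≤ Real.exp (-(j / N : ℝ) + (j / N : ℝ) ^ 2)) (k : ℕ) (hk : 2 * k ≤ N) :
    Real.exp (-((k * (k + 1) : ℝ) / (2 * N)) - (k + 1) * (k / N : ℝ) ^ 2) ≤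
        ∏ j ∈ Finset.range (k + 1), a j ∧
      ∏ j ∈ Finset.range (k + 1), a j ≤
        Real.exp (-((k * (k + 1) : ℝ) / (2 * N)) + (k + 1) * (k / N : ℝ) ^ 2) := by
  have hN' : (0 : ℝ) < N := by exact_mod_cast hN
  have s1 : ∑ j ∈ Finset.range (k + 1), (j / N : ℝ) = (k * (k + 1) : ℝ) / (2 * N) := by
    have := Finset.sum_range_id_mul_two (k + 1)
    have h2 : (∑ j ∈ Finset.range (k + 1), (j : ℝ)) * 2 = (k + 1) * k := by
      have := congrArg (Nat.cast (R := ℝ)) this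
      push_cast at this
      simpa using this
    rw [← Finset.sum_div, div_eq_div_iff hN'.ne' (by positivity)]
    linear_combination (N : ℝ) * h2
  have s2 : ∑ j ∈ Finset.range (k + 1), (j / N : ℝ) ^ 2 ≤ (k + 1) * (k / N : ℝ) ^ 2 := by
    calc _ ≤ ∑ j ∈ Finset.range (k + 1), (k / N : ℝ) ^ 2 := by
          refine Finset.sum_le_sum fun j hj => ?_
          have : (j : ℝ) ≤ k := by exact_mod_cast Nat.lt_succ_iff.1 (Finset.mem_range.1 hj)
          gcongr
      _ = _ := by simp
  have hj : ∀ j ∈ Finset.range (k + 1), 2 * j ≤ N := fun j hj => by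
    have := Finset.mem_range.1 hj; omega
  constructor
  · calc _ ≤ Real.exp (∑ j ∈ Finset.range (k + 1), (-(j / N : ℝ) - (j / N : ℝ) ^ 2)) := by
          refine Real.exp_le_exp.2 ?_
          rw [Finset.sum_sub_distrib, Finset.sum_neg_distrib, s1]; linarith
      _ = ∏ j ∈ Finset.range (k + 1), Real.exp (-(j / N : ℝ) - (j / N : ℝ) ^ 2) :=
          Real.exp_sum _ _
      _ ≤ _ := Finset.prod_le_prod (fun _ _ => (Real.exp_pos _).le) fun j h' => (h j (hj j h')).1
  · calc _ ≤ ∏ j ∈ Finset.range (k + 1), Real.exp (-(j / N : ℝ) + (j / N : ℝ) ^ 2) :=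
          Finset.prod_le_prod (fun j h' => (Real.exp_pos _).le.trans (h j (hj j h')).1)
            fun j h' => (h j (hj j h')).2
      _ = Real.exp (∑ j ∈ Finset.range (k + 1), (-(j / N : ℝ) + (j / N : ℝ) ^ 2)) :=
          (Real.exp_sum _ _).symm
      _ ≤ _ := by
          refine Real.exp_le_exp.2 ?_
          rw [Finset.sum_add_distrib, Finset.sum_neg_distrib, s1]; linarith

open MeasureTheory Filter Topology in
lemma half_sum_limit {ν : ℝ} (hν : 0 < ν) (a : ℕ → ℕ → ℝ) (h0 : ∀ N j, 0 ≤ a N j)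
    (h1 : ∀ N j, a N j ≤ 1)
    (h2 : ∀ N j : ℕ, 0 < N → √N ≤ j → a N j ≤ Real.exp (-(1 / (2 * √N))))
    (h3 : ∀ N j : ℕ, 0 < N → 2 * j ≤ N → Real.exp (-(j / N : ℝ) - (j / N : ℝ) ^ 2) ≤ a N j ∧
      a N j ≤ Real.exp (-(j / N : ℝ) + (j / N : ℝ) ^ 2)) :
    Tendsto (fun N : ℕ => (√N)⁻¹ * ∑' k, (∏ j ∈ Finset.range (k + 1), a N j) ^ ν) atTop
      (𝓝 (√(Real.pi / (ν / 2)) / 2)) := by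
  set P : ℕ → ℕ → ℝ := fun N k => ∏ j ∈ Finset.range (k + 1), a N j with hP
  have hP0 : ∀ N k, 0 ≤ P N k := fun N k => Finset.prod_nonneg fun j _ => h0 N j
  set F : ℕ → ℝ → ℝ := fun N u => (P N ⌊u * √N⌋₊) ^ ν with hF
  have hmeas : ∀ N, Measurable (F N) := fun N => by
    have : Measurable (fun k : ℕ => (P N k) ^ ν) := measurable_from_top
    exact this.comp (Nat.measurable_floor.comp (measurable_id.mul_const _))
  have hbd : ∀ N : ℕ, 0 < N → ∀ u : ℝ, 0 < u → ‖F N u‖ ≤ Real.exp ν * Real.exp (-(ν / 2) * u) := by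
    intro N hN u hu
    have hN1 : (1 : ℝ) ≤ N := by exact_mod_cast hN
    have hs1 : 1 ≤ √(N : ℝ) := by rw [Real.one_le_sqrt]; exact hN1
    have hs : 0 < √(N : ℝ) := by linarith
    have hb := prod_decay (a N) (√N) hs (h0 N) (h1 N) (fun j hj => h2 N j hN hj) ⌊u * √N⌋₊
    rw [Real.norm_of_nonneg (Real.rpow_nonneg (hP0 _ _) _)]
    refine (Real.rpow_le_rpow (hP0 _ _) hb hν.le).trans ?_
    rw [← Real.exp_mul, ← Real.exp_add]
    refine Real.exp_le_exp.2 ?_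
    have hfl : u * √N - 1 ≤ (⌊u * √(N : ℝ)⌋₊ : ℝ) := by linarith [Nat.lt_floor_add_one (u * √(N : ℝ))]
    have hdiv : u / 2 - 1 / 2 ≤ (⌊u * √(N : ℝ)⌋₊ : ℝ) / (2 * √N) := by
      rw [le_div_iff₀ (by positivity)]; nlinarith
    nlinarith
  have hint : Integrable (fun u : ℝ => Real.exp ν * Real.exp (-(ν / 2) * u))
      (volume.restrict (Set.Ioi 0)) := (exp_neg_integrableOn_Ioi 0 (by linarith)).const_mul _
  have hlim : ∀ u : ℝ, 0 < u → Tendsto (fun N => F N u) atTop (𝓝 (Real.exp (-(ν / 2) * u ^ 2))) := by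
    intro u hu
    have hsq : Tendsto (fun N : ℕ => √(N : ℝ)) atTop atTop :=
      Real.tendsto_sqrt_atTop.comp tendsto_natCast_atTop_atTop
    have hκ : Tendsto (fun N : ℕ => (⌊u * √(N : ℝ)⌋₊ : ℝ) / √N) atTop (𝓝 u) :=
      (tendsto_nat_floor_mul_div_atTop hu.le).comp hsq
    have hi : Tendsto (fun N : ℕ => (√(N : ℝ))⁻¹) atTop (𝓝 0) := tendsto_inv_atTop_zero.comp hsq
    have t1 : Tendsto (fun N : ℕ => ((⌊u * √(N : ℝ)⌋₊ * (⌊u * √(N : ℝ)⌋₊ + 1) : ℝ) / (2 * N))) atTop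
        (𝓝 (u ^ 2 / 2)) := by
      have := ((hκ.mul (hκ.add hi)).div_const 2)
      rw [add_zero, ← sq] at this
      refine this.congr' ?_
      filter_upwards [eventually_gt_atTop 0] with N hN
      have hN' : (0 : ℝ) < N := by exact_mod_cast hN
      have hs := Real.sqrt_pos.2 hN'
      have e := Real.sq_sqrt hN'.le
      set k : ℝ := (⌊u * √(N : ℝ)⌋₊ : ℝ)
      nth_rw 4 [← e]
      field_simp
    have t2 : Tendsto (fun N : ℕ => ((⌊u * √(N : ℝ)⌋₊ : ℝ) + 1) * ((⌊u * √(N : ℝ)⌋₊ : ℝ) / N) ^ 2) atTop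
        (𝓝 0) := by
      have := ((hκ.add hi).mul (hκ.pow 2)).mul hi
      rw [mul_zero] at this
      refine this.congr' ?_
      filter_upwards [eventually_gt_atTop 0] with N hN
      have hN' : (0 : ℝ) < N := by exact_mod_cast hN
      have hs := Real.sqrt_pos.2 hN'
      have e := Real.sq_sqrt hN'.le
      set k : ℝ := (⌊u * √(N : ℝ)⌋₊ : ℝ)
      nth_rw 5 [← e]
      field_simp
    have hk : ∀ᶠ N : ℕ in atTop, 0 < N ∧ 2 * ⌊u * √(N : ℝ)⌋₊ ≤ N := by
      filter_upwards [eventually_gt_atTop 0, hsq.eventually_ge_atTop (2 * u)] with N hN h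
      refine ⟨hN, ?_⟩
      have hN' : (0 : ℝ) ≤ N := by positivity
      have hf := Nat.floor_le (by positivity : 0 ≤ u * √(N : ℝ))
      have : (2 * ⌊u * √(N : ℝ)⌋₊ : ℝ) ≤ N := by
        nlinarith [Real.mul_self_sqrt hN', Real.sqrt_nonneg (N : ℝ)]
      exact_mod_cast this
    have hPl : Tendsto (fun N : ℕ => P N ⌊u * √(N : ℝ)⌋₊) atTop (𝓝 (Real.exp (-(u ^ 2 / 2)))) := by
      have l1 := (Real.continuous_exp.tendsto _).comp (t1.neg.sub t2)
      have l2 := (Real.continuous_exp.tendsto _).comp (t1.neg.add t2)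
      rw [sub_zero] at l1
      rw [add_zero] at l2
      refine tendsto_of_tendsto_of_tendsto_of_le_of_le' l1 l2 ?_ ?_
      · filter_upwards [hk] with N hN
        exact (prod_sandwich (a N) N hN.1 (fun j hj => h3 N j hN.1 hj) _ hN.2).1
      · filter_upwards [hk] with N hN
        exact (prod_sandwich (a N) N hN.1 (fun j hj => h3 N j hN.1 hj) _ hN.2).2
    have := hPl.rpow_const (p := ν) (Or.inl (Real.exp_pos _).ne')
    rw [← Real.exp_mul] at this
    convert this using 3
    ring
  have main : Tendsto (fun N : ℕ => ∫ u in Set.Ioi (0 : ℝ), F (N + 1) u) atTop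
      (𝓝 (∫ u in Set.Ioi (0 : ℝ), Real.exp (-(ν / 2) * u ^ 2))) := by
    refine tendsto_integral_of_dominated_convergence _
      (fun N => (hmeas (N + 1)).aestronglyMeasurable) hint (fun N => ?_) ?_
    · filter_upwards [ae_restrict_mem measurableSet_Ioi] with u hu
      exact hbd (N + 1) (by omega) u hu
    · filter_upwards [ae_restrict_mem measurableSet_Ioi] with u hu
      exact (hlim u hu).comp (tendsto_add_atTop_nat 1)
  rw [integral_gaussian_Ioi] at main
  rw [← tendsto_add_atTop_iff_nat 1]
  refine main.congr fun N => ?_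
  have hs : 0 < √(((N + 1 : ℕ)) : ℝ) := Real.sqrt_pos.2 (by positivity)
  refine integral_floor (fun k => P (N + 1) k ^ ν) _ hs ?_
  refine Integrable.mono' hint (hmeas (N + 1)).aestronglyMeasurable ?_
  filter_upwards [ae_restrict_mem measurableSet_Ioi] with u hu
  exact hbd (N + 1) (by omega) u hu

lemma wt_succ {ν x : ℝ} (i : ℕ) :
    wt ν x (i + 1) * ((i : ℝ) + 1) ^ ν = x ^ ν * wt ν x i := by
  have hi : (0 : ℝ) < (i : ℝ) + 1 := by positivity
  have e1 : (((i + 1).factorial : ℕ) : ℝ) ^ ν = ((i : ℝ) + 1) ^ ν * (i.factorial : ℝ) ^ ν := by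
    rw [Nat.factorial_succ]; push_cast
    rw [Real.mul_rpow hi.le (by positivity)]
  have hp := Real.rpow_pos_of_pos hi ν
  have hf := fact_rpow_pos ν i
  unfold wt
  rw [e1, pow_succ]
  field_simp

/-- Upward ratio factors. -/
noncomputable def aup (N j : ℕ) : ℝ := (1 + (j : ℝ) / N)⁻¹

/-- Downward ratio factors. -/
noncomputable def adn (N j : ℕ) : ℝ := max 0 (1 - (j : ℝ) / N)

lemma aup_nonneg (N j : ℕ) : 0 ≤ aup N j := by unfold aup; positivity

lemma adn_nonneg (N j : ℕ) : 0 ≤ adn N j := le_max_left _ _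

lemma wt_up {ν : ℝ} (N : ℕ) (hN : 0 < N) (k : ℕ) :
    wt ν N (N + k) = wt ν N N * (∏ j ∈ Finset.range (k + 1), aup N j) ^ ν := by
  have hN' : (0 : ℝ) < N := by exact_mod_cast hN
  induction k with
  | zero => simp [aup]
  | succ k ih =>
    rw [Finset.prod_range_succ, Real.mul_rpow (Finset.prod_nonneg fun j _ => aup_nonneg N j)
      (aup_nonneg N _), ← mul_assoc, ← ih]
    have h := wt_succ (ν := ν) (x := N) (N + k)
    have e : aup N (k + 1) = (N : ℝ) / (((N + k : ℕ) : ℝ) + 1) := by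
      unfold aup; push_cast; field_simp; ring
    have hp := Real.rpow_pos_of_pos (by positivity : (0 : ℝ) < ((N + k : ℕ) : ℝ) + 1) ν
    rw [e, Real.div_rpow hN'.le (by positivity), ← add_assoc]
    field_simp
    linarith

lemma wt_dn {ν : ℝ} (N : ℕ) (k : ℕ) (hk : k < N) :
    wt ν N (N - 1 - k) = wt ν N N * (∏ j ∈ Finset.range (k + 1), adn N j) ^ ν := by
  have hN' : (0 : ℝ) < N := by exact_mod_cast (by omega : 0 < N)
  have hq := Real.rpow_pos_of_pos hN' ν
  induction k with
  | zero =>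
    obtain ⟨m, rfl⟩ : ∃ m, N = m + 1 := ⟨N - 1, by omega⟩
    have h := wt_succ (ν := ν) (x := (m + 1 : ℕ)) m
    have e : ((m + 1 : ℕ) : ℝ) = (m : ℝ) + 1 := by push_cast; ring
    rw [← e, mul_comm] at h
    have := mul_left_cancel₀ hq.ne' h
    rw [this]; simp [adn]
  | succ k ih =>
    have ih := ih (by omega)
    rw [Finset.prod_range_succ, Real.mul_rpow (Finset.prod_nonneg fun j _ => adn_nonneg N j)
      (adn_nonneg N _), ← mul_assoc, ← ih]
    obtain ⟨m, hm⟩ : ∃ m, N = m + 1 + k + 1 := ⟨N - 1 - k - 1, by omega⟩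
    have i1 : N - 1 - k = m + 1 := by omega
    have i2 : N - 1 - (k + 1) = m := by omega
    have h := wt_succ (ν := ν) (x := N) m
    have e : adn N (k + 1) = ((m : ℝ) + 1) / N := by
      have : 1 - ((k + 1 : ℕ) : ℝ) / N = ((m : ℝ) + 1) / N := by
        have : (N : ℝ) = m + 1 + k + 1 := by rw [hm]; push_cast; ring
        field_simp; rw [this]; push_cast; ring
      unfold adn
      rw [this]; exact max_eq_right (by positivity)
    rw [i1, i2, e, Real.div_rpow (by positivity) hN'.le]
    field_simp
    linarith

lemma cmpZ_split {ν : ℝ} (hν : 0 < ν) (N : ℕ) (hN : 0 < N) :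
    cmpZ ((N : ℝ) ^ ν) ν = wt ν N N * ((∑' k, (∏ j ∈ Finset.range (k + 1), aup N j) ^ ν) +
      ∑' k, (∏ j ∈ Finset.range (k + 1), adn N j) ^ ν) := by
  have hN' : (0 : ℝ) < N := by exact_mod_cast hN
  have hs : Summable (fun i => wt ν N i) := by
    simpa using (PB.const 1).summable hν hN'
  have e0 : cmpZ ((N : ℝ) ^ ν) ν = ∑' i, wt ν N i := rfl
  rw [e0, ← hs.sum_add_tsum_nat_add N, ← Finset.sum_range_reflect, mul_add, ← tsum_mul_left, add_comm]
  congr 1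
  · refine tsum_congr fun k => ?_
    rw [add_comm, wt_up N hN]
  · rw [tsum_eq_sum (s := Finset.range N), Finset.mul_sum]
    · refine Finset.sum_congr rfl fun k hk => ?_
      exact wt_dn N k (Finset.mem_range.1 hk)
    · intro k hk
      have hk' : N ≤ k := by simpa using hk
      have : ∏ j ∈ Finset.range (k + 1), adn N j = 0 :=
        Finset.prod_eq_zero (i := N) (Finset.mem_range.2 (by omega)) (by
          simp [adn, hN'.ne'])
      rw [this, Real.zero_rpow hν.ne']

lemma sqrt_ratio (N j : ℕ) (hN : 0 < N) (hj : √N ≤ j) : 1 / √N ≤ (j : ℝ) / N := by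
  have hN' : (0 : ℝ) < N := by exact_mod_cast hN
  have hs := Real.sqrt_pos.2 hN'
  rw [div_le_div_iff₀ hs hN']
  nlinarith [Real.mul_self_sqrt hN'.le]

open Filter Topology in
lemma up_limit {ν : ℝ} (hν : 0 < ν) :
    Tendsto (fun N : ℕ => (√N)⁻¹ * ∑' k, (∏ j ∈ Finset.range (k + 1), aup N j) ^ ν) atTop
      (𝓝 (√(Real.pi / (ν / 2)) / 2)) := by
  refine half_sum_limit hν aup aup_nonneg (fun N j => ?_) (fun N j hN hj => ?_) (fun N j hN hj => ?_)
  · unfold aup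
    exact inv_le_one_of_one_le₀ (by linarith [(by positivity : 0 ≤ (j : ℝ) / N)])
  · have hr := sqrt_ratio N j hN hj
    have hN1 : (1 : ℝ) ≤ N := by exact_mod_cast hN
    have hs1 : 1 ≤ √(N : ℝ) := by rw [Real.one_le_sqrt]; exact hN1
    have hs0 : 0 < 1 / √(N : ℝ) := by positivity
    have hs2 : 1 / √(N : ℝ) ≤ 1 := by rw [div_le_one (by linarith)]; exact hs1
    have e : 1 / (2 * √(N : ℝ)) = (1 / √(N : ℝ)) / 2 := by field_simp
    rw [e]
    set s := 1 / √(N : ℝ)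
    unfold aup
    refine (inv_anti₀ (by linarith) (by linarith : 1 + s ≤ 1 + (j : ℝ) / N)).trans ?_
    have h := Real.add_one_le_exp (-(s / 2))
    refine le_trans ?_ h
    rw [inv_le_iff_one_le_mul₀ (by linarith)]
    nlinarith
  · unfold aup
    have ht : 0 ≤ (j : ℝ) / N := by positivity
    set t := (j : ℝ) / N
    constructor
    · refine le_trans (b := Real.exp (-t)) (Real.exp_le_exp.2 (by nlinarith)) ?_
      rw [Real.exp_neg]
      exact inv_anti₀ (by linarith) (by linarith [Real.add_one_le_exp t])
    · have h := Real.add_one_le_exp (-t + t ^ 2)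
      refine le_trans ?_ h
      rw [inv_le_iff_one_le_mul₀ (by linarith)]
      nlinarith [pow_nonneg ht 3]

open Filter Topology in
lemma dn_limit {ν : ℝ} (hν : 0 < ν) :
    Tendsto (fun N : ℕ => (√N)⁻¹ * ∑' k, (∏ j ∈ Finset.range (k + 1), adn N j) ^ ν) atTop
      (𝓝 (√(Real.pi / (ν / 2)) / 2)) := by
  have up : ∀ N j : ℕ, adn N j ≤ Real.exp (-((j : ℝ) / N)) := fun N j =>
    max_le (Real.exp_pos _).le (by linarith [Real.add_one_le_exp (-((j : ℝ) / N))])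
  refine half_sum_limit hν adn adn_nonneg (fun N j => ?_) (fun N j hN hj => ?_) (fun N j hN hj => ?_)
  · exact max_le zero_le_one (by linarith [(by positivity : 0 ≤ (j : ℝ) / N)])
  · have hr := sqrt_ratio N j hN hj
    have e : 1 / (2 * √(N : ℝ)) = (1 / √(N : ℝ)) / 2 := by field_simp
    rw [e]
    refine (up N j).trans (Real.exp_le_exp.2 ?_)
    have hs0 : 0 ≤ 1 / √(N : ℝ) := by positivity
    linarith
  · have hN' : (0 : ℝ) < N := by exact_mod_cast hN
    have ht : 0 ≤ (j : ℝ) / N := by positivity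
    have ht2 : (j : ℝ) / N ≤ 1 / 2 := by
      rw [div_le_div_iff₀ hN' (by norm_num)]
      have : ((2 * j : ℕ) : ℝ) ≤ N := by exact_mod_cast hj
      push_cast at this; linarith
    constructor
    · refine le_trans ?_ (le_max_right _ _)
      set t := (j : ℝ) / N
      have h := Real.quadratic_le_exp_of_nonneg (by positivity : 0 ≤ t + t ^ 2)
      have e : -t - t ^ 2 = -(t + t ^ 2) := by ring
      rw [e, Real.exp_neg, inv_le_iff_one_le_mul₀ (Real.exp_pos _)]
      refine le_trans ?_ (mul_le_mul_of_nonneg_left h (by linarith : 0 ≤ 1 - t))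
      have h3 : 0 ≤ t ^ 2 * (1 - t - t ^ 2 - t ^ 3) := by
        refine mul_nonneg (sq_nonneg _) ?_
        have : t ^ 2 ≤ t * (1 / 2) := by nlinarith
        have : t ^ 3 ≤ t * (1 / 4) := by nlinarith [mul_nonneg ht ht]
        linarith
      nlinarith
    · exact (up N j).trans (Real.exp_le_exp.2 (by nlinarith))

lemma wt_stirling {ν : ℝ} (N : ℕ) (hN : 0 < N) :
    wt ν N N * Real.exp (-(ν * N)) * √N ^ ν = ((√2 * Stirling.stirlingSeq N)⁻¹) ^ ν := by
  have hN' : (0 : ℝ) < N := by exact_mod_cast hN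
  have hf : (0 : ℝ) < N.factorial := by exact_mod_cast N.factorial_pos
  have hs := Real.sqrt_pos.2 hN'
  have e1 : ((N : ℝ) ^ ν) ^ N = ((N : ℝ) ^ N) ^ ν := by
    rw [← Real.rpow_natCast, ← Real.rpow_natCast, ← Real.rpow_mul hN'.le, ← Real.rpow_mul hN'.le,
      mul_comm]
  have e2 : Real.exp (-(ν * N)) = (Real.exp (-N)) ^ ν := by
    rw [← Real.exp_mul]; congr 1; ring
  unfold wt
  rw [e1, e2, ← Real.div_rpow (by positivity) (by positivity), ← Real.mul_rpow (by positivity)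
    (by positivity), ← Real.mul_rpow (by positivity) (by positivity)]
  congr 1
  unfold Stirling.stirlingSeq
  have e3 : Real.exp 1 ^ N = Real.exp N := by rw [← Real.exp_nat_mul, mul_one]
  rw [Real.sqrt_mul (by norm_num), div_pow, e3, Real.exp_neg]
  have h2 : (√2 : ℝ) ≠ 0 := by positivity
  have he := Real.exp_pos (N : ℝ)
  field_simp

open Filter Topology in
lemma cmpZ_const {ν : ℝ} (hν : 0 < ν) :
    Tendsto (fun N : ℕ => cmpZ ((N : ℝ) ^ ν) ν * (N : ℝ) ^ ((ν - 1) / 2) *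
      (2 * Real.pi) ^ ((ν - 1) / 2) * √ν * Real.exp (-(ν * N))) atTop (𝓝 1) := by
  have hpi := Real.pi_pos
  have h1 := (up_limit hν).add (dn_limit hν)
  have h2 : Tendsto (fun N : ℕ => ((√2 * Stirling.stirlingSeq N)⁻¹) ^ ν) atTop
      (𝓝 (((√2 * √Real.pi)⁻¹) ^ ν)) := by
    have hne : √2 * √Real.pi ≠ 0 := by positivity
    exact ((Stirling.tendsto_stirlingSeq_sqrt_pi.const_mul (√2)).inv₀ hne).rpow_const
      (Or.inl (inv_ne_zero hne))
  have half : ∀ y : ℝ, 0 < y → y ^ ((ν - 1) / 2) = √y ^ ν * (√y)⁻¹ := by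
    intro y hy
    have hs := Real.sqrt_pos.2 hy
    rw [← Real.rpow_neg_one (√y), ← Real.rpow_add hs, Real.sqrt_eq_rpow, ← Real.rpow_mul hy.le]
    congr 1; ring
  have h3 := ((h1.mul h2).mul_const ((2 * Real.pi) ^ ((ν - 1) / 2))).mul_const (√ν)
  have lim : (√(Real.pi / (ν / 2)) / 2 + √(Real.pi / (ν / 2)) / 2) * ((√2 * √Real.pi)⁻¹) ^ ν *
      (2 * Real.pi) ^ ((ν - 1) / 2) * √ν = 1 := by
    have e1 : Real.pi / (ν / 2) = (2 * Real.pi) / ν := by field_simp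
    rw [half _ (by positivity), e1, Real.sqrt_div (by positivity), ← Real.sqrt_mul (by norm_num)]
    have hs : 0 < √(2 * Real.pi) := by positivity
    have hn : 0 < √ν := by positivity
    have hp := Real.rpow_pos_of_pos hs ν
    rw [Real.inv_rpow hs.le]
    field_simp
    norm_num
  rw [lim] at h3
  refine h3.congr' ?_
  filter_upwards [eventually_gt_atTop 0] with N hN
  have hN' : (0 : ℝ) < N := by exact_mod_cast hN
  rw [← wt_stirling N hN, cmpZ_split hν N hN, half N hN']
  ring

lemma cmpZ_pos {ν x : ℝ} (hν : 0 < ν) (hx : 0 < x) : 0 < cmpZ (x ^ ν) ν := by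
  rw [← SS_one_eq]; exact SS_one_pos hν hx

/-- Normalized logarithm of the CMP constant. -/
noncomputable def Hf (ν x : ℝ) : ℝ :=
  Real.log (cmpZ (x ^ ν) ν) - ν * x + (ν - 1) / 2 * Real.log x - (ν ^ 2 - 1) / (24 * ν) * x⁻¹ -
    (ν ^ 2 - 1) / (48 * ν ^ 2) * x⁻¹ ^ 2

lemma Hf_hasDerivAt {ν : ℝ} (hν : 0 < ν) {x : ℝ} (hx : 0 < x) :
    HasDerivAt (Hf ν) (ν * (mom ν x 1 - (-(ν-1)/(2*ν)*(1/x) - (ν^2-1)/(24*ν^2)*(1/x)^2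
      - (ν^2-1)/(24*ν^3)*(1/x)^3))) x := by
  have h1 := log_cmpZ_hasDerivAt hν hx
  have h2 := (hasDerivAt_id x).const_mul ν
  have h3 := (Real.hasDerivAt_log hx.ne').const_mul ((ν - 1) / 2)
  have h4 := (hasDerivAt_inv hx.ne').const_mul ((ν ^ 2 - 1) / (24 * ν))
  have h5 := ((hasDerivAt_inv hx.ne').pow 2).const_mul ((ν ^ 2 - 1) / (48 * ν ^ 2))
  refine ((((h1.sub h2).add h3).sub h4).sub h5).congr_deriv ?_
  simp only [Nat.add_one_sub_one, Nat.reduceSub, pow_one, Nat.cast_ofNat]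
  field_simp
  ring

open Filter Topology in
lemma Hf_tendsto {ν : ℝ} (hν : 0 < ν) :
    Tendsto (fun N : ℕ => Hf ν N) atTop
      (𝓝 (-Real.log ((2 * Real.pi) ^ ((ν - 1) / 2) * √ν))) := by
  have hpi := Real.pi_pos
  have hκ : 0 < (2 * Real.pi) ^ ((ν - 1) / 2) * √ν := by positivity
  have h1 := (cmpZ_const hν).log one_ne_zero
  have hi : Tendsto (fun N : ℕ => ((N : ℝ))⁻¹) atTop (𝓝 0) := tendsto_inv_atTop_nhds_zero_nat
  have h2 := ((h1.sub_const (Real.log ((2 * Real.pi) ^ ((ν - 1) / 2) * √ν))).sub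
    (hi.const_mul ((ν ^ 2 - 1) / (24 * ν)))).sub ((hi.pow 2).const_mul ((ν ^ 2 - 1) / (48 * ν ^ 2)))
  simp only [Real.log_one, zero_sub, mul_zero, sub_zero, ne_eq, OfNat.ofNat_ne_zero,
    not_false_eq_true, zero_pow] at h2
  refine h2.congr' ?_
  filter_upwards [eventually_gt_atTop 0] with N hN
  have hN' : (0 : ℝ) < N := by exact_mod_cast hN
  have hZ := cmpZ_pos hν hN'
  have hp := Real.rpow_pos_of_pos hN' ((ν - 1) / 2)
  unfold Hf
  rw [show cmpZ ((N : ℝ) ^ ν) ν * (N : ℝ) ^ ((ν - 1) / 2) *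
      (2 * Real.pi) ^ ((ν - 1) / 2) * √ν * Real.exp (-(ν * N)) = cmpZ ((N : ℝ) ^ ν) ν *
      (N : ℝ) ^ ((ν - 1) / 2) * ((2 * Real.pi) ^ ((ν - 1) / 2) * √ν) * Real.exp (-(ν * N)) by ring,
    Real.log_mul (by positivity) (Real.exp_pos _).ne', Real.log_mul (by positivity) hκ.ne',
    Real.log_mul hZ.ne' hp.ne', Real.log_exp, Real.log_rpow hN']
  ring

open Filter Topology in
lemma Hf_bound {ν : ℝ} (hν : 0 < ν) : ∃ K X, 0 < K ∧ 1 ≤ X ∧ ∀ x ≥ X,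
    |Hf ν x + Real.log ((2 * Real.pi) ^ ((ν - 1) / 2) * √ν)| ≤ K * x⁻¹ ^ 3 := by
  obtain ⟨C, X, hC, hX, h⟩ := first_moment hν
  refine ⟨ν * C / 3, X, by positivity, hX, ?_⟩
  set K := ν * C / 3 with hK
  have hpos : ∀ x ∈ Set.Ici X, 0 < x := fun x hx => by linarith [Set.mem_Ici.1 hx]
  have d3 : ∀ x ∈ Set.Ici X, HasDerivAt (fun x : ℝ => K * x⁻¹ ^ 3) (-(ν * C * (1 / x) ^ 4)) x := by
    intro x hx
    have hx0 := hpos x hx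
    refine (((hasDerivAt_inv hx0.ne').pow 3).const_mul K).congr_deriv ?_
    simp only [Nat.reduceSub, Nat.cast_ofNat]
    rw [hK]; field_simp
  have hb : ∀ x ∈ Set.Ici X, |ν * (mom ν x 1 - (-(ν-1)/(2*ν)*(1/x) - (ν^2-1)/(24*ν^2)*(1/x)^2
      - (ν^2-1)/(24*ν^3)*(1/x)^3))| ≤ ν * C * (1 / x) ^ 4 := by
    intro x hx
    rw [abs_mul, abs_of_pos hν, mul_assoc]
    exact mul_le_mul_of_nonneg_left (h x hx) hν.le
  have anti : AntitoneOn (fun x => Hf ν x + K * x⁻¹ ^ 3) (Set.Ici X) := by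
    have hd := fun x hx => (Hf_hasDerivAt hν (hpos x hx)).add (d3 x hx)
    refine antitoneOn_of_deriv_nonpos (convex_Ici X)
      (fun x hx => (hd x hx).continuousAt.continuousWithinAt)
      (fun x hx => (hd x (interior_subset hx)).differentiableAt.differentiableWithinAt)
      (fun x hx => ?_)
    have hx' := interior_subset hx
    have e := (hd x hx').deriv
    have h2 := (abs_le.1 (hb x hx')).2
    refine le_of_eq_of_le e ?_
    linarith
  have mono : MonotoneOn (fun x => Hf ν x - K * x⁻¹ ^ 3) (Set.Ici X) := by
    have hd := fun x hx => (Hf_hasDerivAt hν (hpos x hx)).sub (d3 x hx)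
    refine monotoneOn_of_deriv_nonneg (convex_Ici X)
      (fun x hx => (hd x hx).continuousAt.continuousWithinAt)
      (fun x hx => (hd x (interior_subset hx)).differentiableAt.differentiableWithinAt)
      (fun x hx => ?_)
    have hx' := interior_subset hx
    have e := (hd x hx').deriv
    have h2 := (abs_le.1 (hb x hx')).1
    refine le_of_le_of_eq ?_ e.symm
    linarith
  have hi : Tendsto (fun N : ℕ => K * ((N : ℝ))⁻¹ ^ 3) atTop (𝓝 0) := by
    have := (tendsto_inv_atTop_nhds_zero_nat (𝕜 := ℝ)).pow 3 |>.const_mul K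
    simpa using this
  have l1 := (Hf_tendsto hν).add hi
  have l2 := (Hf_tendsto hν).sub hi
  rw [add_zero] at l1
  rw [sub_zero] at l2
  intro x hx
  have ev : ∀ᶠ N : ℕ in atTop, x ≤ (N : ℝ) := tendsto_natCast_atTop_atTop.eventually_ge_atTop x
  have u1 := le_of_tendsto l1 (ev.mono fun N hN => anti hx (hx.le.trans hN) hN)
  have u2 := ge_of_tendsto l2 (ev.mono fun N hN => mono hx (hx.le.trans hN) hN)
  simp only at u1 u2
  rw [abs_le]
  constructor <;> linarith

lemma final_in_x {ν : ℝ} (hν : 0 < ν) : ∃ C X, 0 < C ∧ 1 ≤ X ∧ ∀ x ≥ X,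
    |cmpZ (x ^ ν) ν * x ^ ((ν - 1) / 2) * (2 * Real.pi) ^ ((ν - 1) / 2) * √ν * Real.exp (-(ν * x)) -
      (1 + ((ν ^ 2 - 1) / 24) * (ν * x)⁻¹ +
          ((ν ^ 2 - 1) * (ν ^ 2 + 23) / 1152) * ((ν * x) ^ 2)⁻¹)| ≤ C * x⁻¹ ^ 3 := by
  obtain ⟨K, X, hK, hX, h⟩ := Hf_bound hν
  have hpi := Real.pi_pos
  set c := (ν ^ 2 - 1) / (24 * ν) with hc
  set d := (ν ^ 2 - 1) / (48 * ν ^ 2) with hd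
  set M := |c| + |d| + K with hM
  have hM0 : 0 < M := by positivity
  refine ⟨M ^ 3 + K + |d| * |c| + K * |c| + (|d| + K) ^ 2, max X M, by positivity,
    hX.trans (le_max_left _ _), fun x hx => ?_⟩
  have hxX : X ≤ x := (le_max_left _ _).trans hx
  have hxM : M ≤ x := (le_max_right _ _).trans hx
  have hx0 : 0 < x := by linarith
  have hr := h x hxX
  set r := Hf ν x + Real.log ((2 * Real.pi) ^ ((ν - 1) / 2) * √ν) with hrd
  set y := x⁻¹ with hy
  have hy0 : 0 < y := by positivity
  have hy1 : y ≤ 1 := inv_le_one_of_one_le₀ (by linarith)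
  have hMy : M * y ≤ 1 := by
    rw [hy, ← div_eq_mul_inv, div_le_one hx0]; exact hxM
  have hκ : 0 < (2 * Real.pi) ^ ((ν - 1) / 2) * √ν := by positivity
  have hZ := cmpZ_pos hν hx0
  have hp := Real.rpow_pos_of_pos hx0 ((ν - 1) / 2)
  set s := c * y + d * y ^ 2 + r with hs
  have e1 : cmpZ (x ^ ν) ν * x ^ ((ν - 1) / 2) * (2 * Real.pi) ^ ((ν - 1) / 2) * √ν *
      Real.exp (-(ν * x)) = Real.exp s := by
    have : s = Real.log (cmpZ (x ^ ν) ν * x ^ ((ν - 1) / 2) *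
        ((2 * Real.pi) ^ ((ν - 1) / 2) * √ν)) + (-(ν * x)) := by
      rw [Real.log_mul (by positivity) hκ.ne', Real.log_mul hZ.ne' hp.ne', Real.log_rpow hx0, hs, hrd]
      unfold Hf
      ring
    rw [this, Real.exp_add, Real.exp_log (by positivity)]
    ring
  have e2 : 1 + ((ν ^ 2 - 1) / 24) * (ν * x)⁻¹ +
      ((ν ^ 2 - 1) * (ν ^ 2 + 23) / 1152) * ((ν * x) ^ 2)⁻¹ = 1 + c * y + (d + c ^ 2 / 2) * y ^ 2 := by
    rw [hc, hd, hy]; field_simp; ring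
  have y2 : y ^ 2 ≤ y := by nlinarith
  have y3 : y ^ 3 ≤ y ^ 2 := pow_le_pow_of_le_one hy0.le hy1 (by norm_num)
  have y4 : y ^ 4 ≤ y ^ 3 := pow_le_pow_of_le_one hy0.le hy1 (by norm_num)
  have hb1 : |d * y ^ 2 + r| ≤ (|d| + K) * y ^ 2 := by
    refine (abs_add_le _ _).trans ?_
    rw [abs_mul, abs_of_pos (pow_pos hy0 2)]
    nlinarith
  have hsb : |s| ≤ M * y := by
    rw [hs, add_assoc]
    refine (abs_add_le _ _).trans ?_
    rw [abs_mul, abs_of_pos hy0]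
    have := mul_le_mul_of_nonneg_left y2 (by positivity : 0 ≤ |d| + K)
    rw [hM]; linarith
  have hs1 : |s| ≤ 1 := hsb.trans hMy
  have hexp : |Real.exp s - (1 + s + s ^ 2 / 2)| ≤ M ^ 3 * y ^ 3 := by
    have := Real.exp_bound hs1 (n := 3) (by norm_num)
    have e : ∑ m ∈ Finset.range 3, s ^ m / (m.factorial : ℝ) = 1 + s + s ^ 2 / 2 := by
      simp [Finset.sum_range_succ, Nat.factorial]
    rw [e] at this
    refine this.trans ?_
    have h3 : |s| ^ 3 ≤ (M * y) ^ 3 := pow_le_pow_left₀ (abs_nonneg _) hsb 3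
    rw [mul_pow] at h3
    have h4 : ((Nat.succ 3 : ℕ) : ℝ) / ((Nat.factorial 3 : ℕ) * (3 : ℕ)) ≤ 1 := by
      norm_num [Nat.factorial]
    calc _ ≤ |s| ^ 3 * 1 := mul_le_mul_of_nonneg_left h4 (by positivity)
      _ ≤ _ := by linarith
  rw [e1, e2]
  set w := d * y ^ 2 + r with hw
  have key : Real.exp s - (1 + c * y + (d + c ^ 2 / 2) * y ^ 2) =
      (Real.exp s - (1 + s + s ^ 2 / 2)) + (r + c * y * w + w ^ 2 / 2) := by
    rw [show s = c * y + w by rw [hs, hw]; ring, hw]; ring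
  rw [key]
  have b1 : |c * y * w| ≤ |c| * (|d| + K) * y ^ 3 := by
    rw [abs_mul, abs_mul, abs_of_pos hy0]
    calc |c| * y * |w| ≤ |c| * y * ((|d| + K) * y ^ 2) :=
          mul_le_mul_of_nonneg_left hb1 (by positivity)
      _ = _ := by ring
  have b2 : |w ^ 2 / 2| ≤ (|d| + K) ^ 2 * y ^ 3 := by
    rw [abs_of_nonneg (by positivity)]
    have : |w| ^ 2 ≤ ((|d| + K) * y ^ 2) ^ 2 := pow_le_pow_left₀ (abs_nonneg _) hb1 2
    rw [sq_abs] at this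
    have h5 := mul_le_mul_of_nonneg_left y4 (by positivity : 0 ≤ (|d| + K) ^ 2)
    have e5 : ((|d| + K) * y ^ 2) ^ 2 = (|d| + K) ^ 2 * y ^ 4 := by ring
    have h6 := sq_nonneg w
    linarith
  have t1 := abs_add_le (Real.exp s - (1 + s + s ^ 2 / 2)) (r + c * y * w + w ^ 2 / 2)
  have t2 := abs_add_le (r + c * y * w) (w ^ 2 / 2)
  have t3 := abs_add_le r (c * y * w)
  refine t1.trans ?_
  linarith


/-- Second-order asymptotics of the CMP normalizing constant:
`Z(λ,ν) = exp(ν λ^{1/ν}) / (λ^{(ν-1)/(2ν)} (2π)^{(ν-1)/2} √ν)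
          (1 + c₁ (ν λ^{1/ν})⁻¹ + c₂ (ν λ^{1/ν})⁻² + O(λ^{-3/ν}))` as `λ → ∞`,
with `c₁ = (ν²-1)/24` and `c₂ = (ν²-1)(ν²+23)/1152`. -/
theorem cmpZ_second_order_asymptotic (ν : ℝ) (hν : 0 < ν) :
    ∃ C > (0 : ℝ), ∃ Λ > (0 : ℝ), ∀ lam : ℝ, lam ≥ Λ →
      |cmpZ lam ν * lam ^ ((ν - 1) / (2 * ν)) * (2 * Real.pi) ^ ((ν - 1) / 2) *
          Real.sqrt ν * Real.exp (-(ν * lam ^ (1 / ν))) -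
        (1 + ((ν ^ 2 - 1) / 24) * (ν * lam ^ (1 / ν))⁻¹ +
          ((ν ^ 2 - 1) * (ν ^ 2 + 23) / 1152) * ((ν * lam ^ (1 / ν)) ^ 2)⁻¹)|
        ≤ C * lam ^ (-(3 / ν)) := by
  obtain ⟨C, X, hC, hX, h⟩ := final_in_x hν
  have hX0 : 0 < X := by linarith
  refine ⟨C, hC, X ^ ν, Real.rpow_pos_of_pos hX0 ν, fun lam hlam => ?_⟩
  have hl : 0 < lam := lt_of_lt_of_le (Real.rpow_pos_of_pos hX0 ν) hlam
  have hx : X ≤ lam ^ (1 / ν) := by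
    have := Real.rpow_le_rpow (Real.rpow_pos_of_pos hX0 ν).le hlam (by positivity : 0 ≤ 1 / ν)
    rwa [← Real.rpow_mul hX0.le, mul_one_div_cancel hν.ne', Real.rpow_one] at this
  have hm := h _ hx
  have e1 : (lam ^ (1 / ν)) ^ ν = lam := by
    rw [← Real.rpow_mul hl.le, one_div_mul_cancel hν.ne', Real.rpow_one]
  have e2 : (lam ^ (1 / ν)) ^ ((ν - 1) / 2) = lam ^ ((ν - 1) / (2 * ν)) := by
    rw [← Real.rpow_mul hl.le]; congr 1; field_simp
  have e3 : (lam ^ (1 / ν))⁻¹ ^ 3 = lam ^ (-(3 / ν)) := by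
    rw [← Real.rpow_neg hl.le, ← Real.rpow_natCast, ← Real.rpow_mul hl.le]
    congr 1; push_cast; ring
  rw [e1, e2, e3] at hm
  exact hm
end
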